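/- arXiv:2303.03201 — 9 statements merged into one kernel-verified Lean document; each statement's English description precedes it below -/
import Mathlib

section
/- Let f(x) = Σ_{j=0}^{s} c_j e^{λ_j x} where c_0, …, c_s are nonzero complex numbers and λ_0, …, λ_s are distinct complex numbers, and let n be the dimension of the ℚ-linear span of Im(λ_1 − λ_0), …, Im(λ_s − λ_0). If q ∈ ℂ[z_1, …, z_m] and v ∈ ℝ^m satisfy f(x) = e^{λ_0 x} · q(e^{i x v_1}, …, e^{i x v_m}) for all x ∈ ℂ, then each of Im(λ_1 − λ_0), …, Im(λ_s − λ_0) lies in the ℚ-linear span of the entries of v; in particular m ≥ n. -/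
open MvPolynomial Complex

/-!
The exponentials `x ↦ exp (a * x)`, `a : ℂ`, are pairwise distinct characters of the additive group
of `ℂ`, hence linearly independent over `ℂ` (Dedekind). Expanding `q` into monomials, the right-hand
side of the hypothesis is a combination of the exponentials with frequencies `lam 0 + I * ∑ d k * v k`,
where `d` ranges over the support of `q`. Since the `lam j` are distinct and `c j ≠ 0`, comparing the
coefficients of `exp (lam j * x)` shows that `lam j` is one of these frequencies. So
`(lam j - lam 0).im = ∑ d k * v k` lies in the span of the `v k`, a space of dimension at most `m`.
-/

/-- The character `x ↦ exp (a * x)` of the additive group of `ℂ`. -/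
noncomputable def expChar (a : ℂ) : Multiplicative ℂ →* ℂ where
  toFun x := Complex.exp (a * x.toAdd)
  map_one' := by simp
  map_mul' x y := by simp [mul_add, Complex.exp_add]

lemma expChar_injective : Function.Injective expChar := by
  intro a b h
  have h1 : (fun x : ℂ => Complex.exp (a * x)) = fun x : ℂ => Complex.exp (b * x) := by
    funext x
    exact DFunLike.congr_fun h (Multiplicative.ofAdd x)
  -- The frequency is the derivative of the exponential at `0`.
  have hd : ∀ a : ℂ, HasDerivAt (fun x : ℂ => Complex.exp (a * x)) a 0 := by
    intro a
    simpa using ((hasDerivAt_id (0 : ℂ)).const_mul a).cexp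
  have ha := hd a
  rw [h1] at ha
  exact ha.unique (hd b)

lemma linearIndependent_expChar :
    LinearIndependent ℂ (fun a : ℂ => (expChar a : Multiplicative ℂ → ℂ)) :=
  (linearIndependent_monoidHom (Multiplicative ℂ) ℂ).comp expChar expChar_injective

/-- A frequency occurring on one side of an identity between exponential sums, with distinct
frequencies and nonzero coefficients on that side, occurs on the other side. -/
lemma exists_freq_eq {ι κ : Type*} [Fintype ι] (c lam : ι → ℂ) (hc : ∀ j, c j ≠ 0)
    (hlam : Function.Injective lam) (S : Finset κ) (b μ : κ → ℂ)
    (h : ∀ x : ℂ, ∑ j, c j * Complex.exp (lam j * x) = ∑ d ∈ S, b d * Complex.exp (μ d * x))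
    (j : ι) : ∃ d ∈ S, μ d = lam j := by
  classical
  have hl : (∑ j, Finsupp.single (lam j) (c j)) = ∑ d ∈ S, Finsupp.single (μ d) (b d) := by
    apply linearIndependent_expChar
    funext x
    simpa [map_sum, Finsupp.linearCombination_single, expChar] using h x.toAdd
  by_contra! hne
  have h2 := DFunLike.congr_fun hl (lam j)
  rw [Finsupp.finsetSum_apply, Finsupp.finsetSum_apply,
    Finset.sum_eq_zero (s := S) fun d hd => Finsupp.single_eq_of_ne (hne d hd).symm,
    Finset.sum_eq_single j (fun i _ hi => Finsupp.single_eq_of_ne (hlam.ne hi).symm) (by simp),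
    Finsupp.single_eq_same] at h2
  exact hc j h2

theorem stmt_1 (s m : ℕ) (c : Fin (s + 1) → ℂ) (lam : Fin (s + 1) → ℂ)
    (hc : ∀ j, c j ≠ 0) (hlam : Function.Injective lam)
    (n : ℕ)
    (hn : n = Module.finrank ℚ
      (Submodule.span ℚ (Set.range fun j : Fin s => (lam j.succ - lam 0).im)))
    (q : MvPolynomial (Fin m) ℂ) (v : Fin m → ℝ)
    (heq : ∀ x : ℂ, (∑ j, c j * Complex.exp (lam j * x)) =
      Complex.exp (lam 0 * x) *
        eval (fun k => Complex.exp (Complex.I * x * (v k : ℂ))) q) :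
    (∀ j : Fin s, (lam j.succ - lam 0).im ∈ Submodule.span ℚ (Set.range v)) ∧ n ≤ m := by
  have key : ∀ j : Fin s, (lam j.succ - lam 0).im ∈ Submodule.span ℚ (Set.range v) := by
    intro j
    obtain ⟨d, -, hd⟩ := exists_freq_eq c lam hc hlam q.support (fun d => q.coeff d)
      (fun d => lam 0 + Complex.I * ((∑ k, (d k : ℝ) * v k : ℝ) : ℂ)) (by
        intro x
        rw [heq x, eval_eq', Finset.mul_sum]
        refine Finset.sum_congr rfl fun d _ => ?_
        have hp : ∏ k, Complex.exp (Complex.I * x * (v k : ℂ)) ^ d k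
            = Complex.exp (Complex.I * ((∑ k, (d k : ℝ) * v k : ℝ) : ℂ) * x) := by
          push_cast
          rw [Finset.mul_sum, Finset.sum_mul, Complex.exp_sum]
          refine Finset.prod_congr rfl fun k _ => ?_
          rw [← Complex.exp_nat_mul]
          congr 1
          ring
        rw [hp, add_mul, Complex.exp_add]
        ring) j.succ
    have him : (lam j.succ - lam 0).im = ∑ k, d k • v k := by
      rw [← hd, add_sub_cancel_left, Complex.I_mul_im, Complex.ofReal_re]
      simp [nsmul_eq_mul]
    rw [him]
    exact Submodule.sum_mem _ fun k _ =>
      nsmul_mem (Submodule.subset_span (Set.mem_range_self k)) _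
  refine ⟨key, ?_⟩
  rw [hn]
  have hle : Submodule.span ℚ (Set.range fun j : Fin s => (lam j.succ - lam 0).im)
      ≤ Submodule.span ℚ (Set.range v) := by
    rw [Submodule.span_le]
    rintro _ ⟨j, rfl⟩
    exact key j
  have : FiniteDimensional ℚ (Submodule.span ℚ (Set.range v)) :=
    FiniteDimensional.span_of_finite ℚ (Set.finite_range v)
  exact (Submodule.finrank_mono hle).trans (by simpa [Set.finrank] using finrank_range_le_card (R := ℚ) v)
end

section
/- Let f(x) = Σ_{j=0}^{s} c_j e^{λ_j x} where c_0, …, c_s are nonzero complex numbers and λ_0, …, λ_s are distinct complex numbers ordered so that Im(λ_0) ≤ Im(λ_j) for all j ≥ 1. If f is real-rooted, then for every j ≥ 1 there exists ω_j ∈ ℝ with ω_j > 0 such that λ_j = λ_0 + i ω_j; equivalently, f(x) = e^{λ_0 x}(c_0 + Σ_{j=1}^{s} c_j e^{i ω_j x}) for all x ∈ ℂ. -/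
/-!
Suppose the exponents do not all have the same real part. Then their convex hull has a non-vertical
lower edge (`exists_lower_edge`), i.e. there are a real `t` and an exponent `λ_p` such that, with
`u = t + i`, the numbers `b_j = (λ_j - λ_p) u` all satisfy `Re b_j ≤ 0`, with equality for at least
two of them. The function `H z = exp (-λ_p u z) f (u z) = ∑ c_j exp (b_j z)` is thus asymptotic,
as `Re z → ∞` in a horizontal strip, to its part `G` with purely imaginary exponents.

* `G` has a zero `z₀` (`exists_zero_expSum`): a zero-free exponential sum is `exp ∘ h` with `h`
  entire of linear growth (Borel–Carathéodory), so `h` is affine and, by linear independence of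
  exponentials, `G` has a single term.
* By simultaneous recurrence (`frequently_exp_near_one`), translates `H (z + n)` come arbitrarily
  close to `G` near `z₀` for infinitely many `n`; a Hurwitz-type argument, via the quantitative
  open mapping theorem, then gives zeros of `H` near `z₀ + n` (`exists_zero_far_right`).

The corresponding zeros `u z` of `f` have imaginary part `Re z + t Im z`, which is positive once
`Re z` is large. So a real-rooted `f` has all its exponents on one vertical line, and injectivity
together with the minimality of `Im λ_0` makes the differences positive multiples of `i`.
-/

open Complex

open Filter Topology Metric

/-! ### Exponential sums in the plane -/

/-- Exponentials with distinct exponents are linearly independent: they are distinct characters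
of the additive group `ℂ`. -/
lemma expSum_coeff_eq_zero {ι : Type*} (J : Finset ι) (a d : ι → ℂ) (ha : Set.InjOn a J)
    (h : ∀ z : ℂ, ∑ j ∈ J, d j * exp (a j * z) = 0) : ∀ j ∈ J, d j = 0 := by
  let χ : ι → (Multiplicative ℂ →* ℂ) := fun j =>
    { toFun := fun z => exp (a j * z.toAdd)
      map_one' := by simp
      map_mul' := fun x y => by simp [mul_add, exp_add] }
  have hχ : Set.InjOn χ J := by
    intro i hi j hj hij
    apply ha hi hj
    have hfun : ∀ z : ℂ, exp (a i * z) = exp (a j * z) := fun z =>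
      DFunLike.congr_fun hij (Multiplicative.ofAdd z)
    have hd (b : ℂ) : HasDerivAt (fun z : ℂ => exp (b * z)) b 0 := by
      simpa using ((hasDerivAt_id (0 : ℂ)).const_mul b).cexp
    have h1 := hd (a i)
    rw [funext hfun] at h1
    exact h1.unique (hd (a j))
  have hli : LinearIndepOn ℂ (fun j => (χ j : Multiplicative ℂ → ℂ)) (J : Set ι) :=
    (linearIndependent_monoidHom (Multiplicative ℂ) ℂ).comp (fun j : (J : Set ι) => χ j)
      (fun i j hij => Subtype.ext (hχ i.2 j.2 hij))
  rw [linearIndepOn_finset_iff] at hli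
  refine hli d ?_
  funext z
  simpa [χ] using h z.toAdd

/-- An entire function of linear growth has constant derivative. -/
lemma deriv_const_of_linear_growth {h : ℂ → ℂ} (hh : Differentiable ℂ h) {K : ℝ}
    (hK : ∀ z, ‖h z‖ ≤ K * (1 + ‖z‖)) : ∃ a, ∀ z, deriv h z = a := by
  have hK0 : 0 ≤ K := by simpa using (norm_nonneg _).trans (hK 0)
  refine hh.deriv.exists_const_forall_eq_of_bounded ?_
  refine isBounded_iff_forall_norm_le.2 ⟨2 * K, ?_⟩
  rintro _ ⟨z, rfl⟩
  have hR : 0 < ‖z‖ + 1 := by positivity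
  refine (norm_deriv_le_of_forall_mem_sphere_norm_le (C := K * (2 * (‖z‖ + 1))) hR
    hh.diffContOnCl fun w hw => (hK w).trans ?_).trans_eq (by field_simp)
  have : ‖w‖ ≤ ‖w - z‖ + ‖z‖ := norm_le_norm_sub_add w z
  rw [mem_sphere_iff_norm.1 hw] at this
  gcongr
  linarith

/-- A linear upper bound on the real part of an entire function alone bounds the whole function
linearly, by Borel–Carathéodory on the disc of radius `2‖z‖ + 1`. -/
lemma linear_growth_of_re_le {h : ℂ → ℂ} (hh : Differentiable ℂ h) {A B : ℝ} (hA : 0 ≤ A)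
    (hB : 0 < B) (hre : ∀ z, (h z).re ≤ A * ‖z‖ + B) :
    ∃ K, ∀ z, ‖h z‖ ≤ K * (1 + ‖z‖) := by
  refine ⟨4 * A + 2 * B + 3 * ‖h 0‖, fun z => ?_⟩
  have hz := norm_nonneg z
  have h0 := norm_nonneg (h 0)
  have key := borelCaratheodory (f := h) (z := z) (R := 2 * ‖z‖ + 1)
    (M := A * (2 * ‖z‖ + 1) + B) (by positivity) hh.differentiableOn
    (fun w hw => (hre w).trans (by
      have : ‖w‖ < 2 * ‖z‖ + 1 := mem_ball_zero_iff.1 hw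
      gcongr)) (by positivity) (mem_ball_zero_iff.2 (by linarith))
  refine key.trans ?_
  have e : 2 * ‖z‖ + 1 - ‖z‖ = ‖z‖ + 1 := by ring
  rw [e, ← add_div, div_le_iff₀ (by positivity)]
  nlinarith [mul_nonneg hA hz, mul_nonneg h0 hz, mul_nonneg hB.le hz, mul_nonneg hA (sq_nonneg ‖z‖),
    mul_nonneg h0 (sq_nonneg ‖z‖), mul_nonneg hB.le (sq_nonneg ‖z‖)]

lemma hasDerivAt_expSum {ι : Type*} (J : Finset ι) (a c : ι → ℂ) (z : ℂ) :
    HasDerivAt (fun z => ∑ j ∈ J, c j * exp (a j * z)) (∑ j ∈ J, c j * a j * exp (a j * z)) z := by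
  refine HasDerivAt.fun_sum fun j _ => ?_
  have h := (((hasDerivAt_id z).const_mul (a j)).cexp).const_mul (c j)
  simp only [id, mul_one] at h
  exact h.congr_deriv (by ring)

lemma differentiable_expSum {ι : Type*} (J : Finset ι) (a c : ι → ℂ) :
    Differentiable ℂ (fun z => ∑ j ∈ J, c j * exp (a j * z)) :=
  fun z => (hasDerivAt_expSum J a c z).differentiableAt

/-- An exponential sum with at least two terms has a zero. Otherwise it would be `exp ∘ h` with
`h` entire of linear growth, hence a solution of `g' = α g`, which forces every exponent
to be `α`. -/
lemma exists_zero_expSum {ι : Type*} (J : Finset ι) (a c : ι → ℂ) (ha : Set.InjOn a J)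
    (hc : ∀ j ∈ J, c j ≠ 0) (hJ : J.Nontrivial) : ∃ z, ∑ j ∈ J, c j * exp (a j * z) = 0 := by
  by_contra! hne
  set g : ℂ → ℂ := fun z => ∑ j ∈ J, c j * exp (a j * z) with hg
  have hgd : Differentiable ℂ g := differentiable_expSum J a c
  have hgne : ∀ z, g z ≠ 0 := hne
  obtain ⟨h, h0, hh⟩ := (Differentiable.isExactOn_univ
    (f := fun z => deriv g z / g z) (hgd.deriv.fun_div hgd hgne)).with_val_at 0 (log (g 0))
  have hh' : ∀ z, HasDerivAt h (deriv g z / g z) z := fun z => hh z (Set.mem_univ z)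
  have hhd : Differentiable ℂ h := fun z => (hh' z).differentiableAt
  have hexp : ∀ z, g z = exp (h z) := by
    have hder : ∀ z, HasDerivAt (fun z => g z * exp (-h z)) 0 z := fun z => by
      refine ((hgd z).hasDerivAt.mul (hh' z).fun_neg.cexp).congr_deriv ?_
      have := hgne z
      field_simp
      ring
    intro z
    have hconst := is_const_of_deriv_eq_zero (fun z => (hder z).differentiableAt)
      (fun z => (hder z).deriv) z 0
    simp only [h0, exp_neg, exp_log (hgne 0)] at hconst
    rw [mul_inv_cancel₀ (hgne 0)] at hconst
    exact (mul_inv_eq_one₀ (exp_ne_zero _)).1 hconst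
  set A : ℝ := ∑ j ∈ J, ‖a j‖
  set C : ℝ := ∑ j ∈ J, ‖c j‖
  have hA : 0 ≤ A := Finset.sum_nonneg fun _ _ => norm_nonneg _
  have hC : 0 ≤ C := Finset.sum_nonneg fun _ _ => norm_nonneg _
  have hbound : ∀ z, ‖g z‖ ≤ C * Real.exp (A * ‖z‖) := fun z => by
    rw [Finset.sum_mul]
    refine (norm_sum_le _ _).trans (Finset.sum_le_sum fun j hj => ?_)
    rw [norm_mul]
    gcongr
    refine (norm_exp_le_exp_norm _).trans (Real.exp_le_exp.2 ?_)
    rw [norm_mul]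
    gcongr
    exact Finset.single_le_sum (f := fun j => ‖a j‖) (fun _ _ => norm_nonneg _) hj
  have hre : ∀ z, (h z).re ≤ A * ‖z‖ + (C + 1) := fun z => by
    rw [← Real.exp_le_exp, ← norm_exp, ← hexp, Real.exp_add, mul_comm (Real.exp (A * ‖z‖))]
    refine (hbound z).trans ?_
    gcongr
    linarith [Real.add_one_le_exp (C + 1)]
  obtain ⟨K, hK⟩ := linear_growth_of_re_le hhd hA (by positivity) hre
  obtain ⟨α, hα⟩ := deriv_const_of_linear_growth hhd hK
  have hode : ∀ z, ∑ j ∈ J, c j * (a j - α) * exp (a j * z) = 0 := fun z => by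
    have h1 : deriv g z = α * g z := by
      rw [← hα z, (hh' z).deriv, div_mul_cancel₀ _ (hgne z)]
    rw [(hasDerivAt_expSum J a c z).deriv, hg, Finset.mul_sum, ← sub_eq_zero,
      ← Finset.sum_sub_distrib] at h1
    rw [← h1]
    exact Finset.sum_congr rfl fun j _ => by ring
  have hall := expSum_coeff_eq_zero J a _ ha hode
  obtain ⟨i, hi, j, hj, hij⟩ := hJ
  have haα : ∀ k ∈ J, a k = α := fun k hk =>
    sub_eq_zero.1 ((mul_eq_zero.1 (hall k hk)).resolve_left (hc k hk))
  exact hij (ha hi hj ((haα i hi).trans (haα j hj).symm))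

/-! ### Zeros along a direction with two dominant terms -/

/-- Simultaneous recurrence: the powers of a point of the compact torus `Circle ^ ι` return
arbitrarily close to `1`. -/
lemma frequently_exp_near_one {ι : Type*} [Fintype ι] (ω : ι → ℝ) {δ : ℝ} (hδ : 0 < δ) :
    ∃ᶠ n : ℕ in atTop, ∀ j, ‖exp (ω j * I * n) - 1‖ < δ := by
  have hcl := mapClusterPt_one_atTop_pow (fun j => Circle.exp (ω j) : ι → Circle)
  have hnhds : {y : ι → Circle | ∀ j, ‖(y j : ℂ) - 1‖ < δ} ∈ 𝓝 (1 : ι → Circle) := by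
    refine IsOpen.mem_nhds ?_ (by simpa using fun _ => hδ)
    simp only [Set.ofPred_forall]
    exact isOpen_iInter_of_finite fun j => isOpen_lt (by fun_prop) continuous_const
  refine (mapClusterPt_iff_frequently.1 hcl _ hnhds).mono fun n hn j => ?_
  have := hn j
  simp only [Pi.pow_apply, Circle.coe_pow, Circle.coe_exp, ← exp_nat_mul] at this
  rwa [mul_comm]

/-- If all exponents lie in the closed left half-plane and at least two lie on the imaginary axis,
the exponential sum has zeros in a horizontal strip with arbitrarily large real part. -/
lemma exists_zero_far_right {ι : Type*} [Fintype ι] (b c : ι → ℂ) (hb : Function.Injective b)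
    (hc : ∀ j, c j ≠ 0) (hre : ∀ j, (b j).re ≤ 0)
    (htwo : ∃ i j, i ≠ j ∧ (b i).re = 0 ∧ (b j).re = 0) :
    ∃ B : ℝ, ∀ T : ℝ, ∃ z : ℂ, |z.im| ≤ B ∧ T ≤ z.re ∧ ∑ j, c j * exp (b j * z) = 0 := by
  classical
  set J : Finset ι := Finset.univ.filter fun j => (b j).re = 0 with hJ
  have hJn : J.Nontrivial := by
    obtain ⟨i, j, hij, hi, hj⟩ := htwo
    exact ⟨i, by simpa [hJ] using hi, j, by simpa [hJ] using hj, hij⟩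
  set G : ℂ → ℂ := fun z => ∑ j ∈ J, c j * exp (b j * z) with hG
  set H : ℂ → ℂ := fun z => ∑ j, c j * exp (b j * z) with hH
  obtain ⟨z₀, hz₀⟩ : ∃ z, G z = 0 :=
    exists_zero_expSum J b c hb.injOn (fun j _ => hc j) hJn
  have hGan : AnalyticOnNhd ℂ G Set.univ :=
    (differentiable_expSum J b c).differentiableOn.analyticOnNhd isOpen_univ
  -- Zeros of `G` are isolated, so `G` is bounded away from `0` on a small circle about `z₀`.
  obtain ⟨r, hr0, hr1, hr⟩ : ∃ r : ℝ, 0 < r ∧ r ≤ 1 ∧ ∀ z ∈ sphere z₀ r, G z ≠ 0 := by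
    rcases (hGan z₀ trivial).eventually_eq_zero_or_eventually_ne_zero with h | h
    · obtain ⟨i, hi⟩ := hJn.nonempty
      have h0 := hGan.eqOn_zero_of_preconnected_of_eventuallyEq_zero isPreconnected_univ trivial h
      exact absurd (expSum_coeff_eq_zero J b c hb.injOn (fun z => h0 (Set.mem_univ z)) i hi) (hc i)
    · rw [eventually_nhdsWithin_iff, Metric.eventually_nhds_iff] at h
      obtain ⟨ρ, hρ, hρ'⟩ := h
      refine ⟨min (ρ / 2) 1, by positivity, min_le_right _ _, fun z hz => hρ' ?_ ?_⟩
      · rw [mem_sphere.1 hz]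
        linarith [min_le_left (ρ / 2) 1]
      · exact ne_of_mem_sphere hz (by positivity)
  obtain ⟨ε, hε, hεG⟩ : ∃ ε > 0, ∀ z ∈ sphere z₀ r, ε ≤ ‖G z‖ := by
    obtain ⟨w, hw, hmin⟩ := (isCompact_sphere z₀ r).exists_isMinOn
      (NormedSpace.sphere_nonempty.2 hr0.le)
      (differentiable_expSum J b c).continuous.norm.continuousOn
    exact ⟨‖G w‖, norm_pos_iff.2 (hr w hw), fun z hz => hmin hz⟩
  set K : ℝ := ∑ j, ‖c j‖ * Real.exp (‖b j‖ * (‖z₀‖ + 1)) with hKdef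
  have hK0 : 0 ≤ K := Finset.sum_nonneg fun _ _ => by positivity
  obtain ⟨δ, hδ, hKδ⟩ : ∃ δ > 0, K * δ ≤ ε / 8 :=
    ⟨ε / 8 / (K + 1), by positivity, by
      rw [← mul_div_assoc, div_le_iff₀ (by positivity)]; nlinarith⟩
  have hrec := frequently_exp_near_one (fun j => (b j).im) hδ
  have hdec : ∀ᶠ n : ℕ in atTop, ∀ j, j ∉ J → ‖exp (b j * n)‖ < δ := by
    refine eventually_all.2 fun j => ?_
    by_cases hj : j ∈ J
    · exact Eventually.of_forall fun n h => absurd hj h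
    · have hneg : (b j).re < 0 := lt_of_le_of_ne (hre j) (by simpa [hJ] using hj)
      have htend : Tendsto (fun n : ℕ => Real.exp ((b j).re * n)) atTop (𝓝 0) :=
        Real.tendsto_exp_atBot.comp (tendsto_natCast_atTop_atTop.const_mul_atTop_of_neg hneg)
      filter_upwards [htend.eventually_lt_const hδ] with n hn _
      simpa [norm_exp] using hn
  refine ⟨|z₀.im| + 1, fun T => ?_⟩
  obtain ⟨n, hn1, hn2, hn3⟩ := (hrec.and_eventually
    (hdec.and (tendsto_natCast_atTop_atTop.eventually_ge_atTop (T - z₀.re + 1)))).exists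
  have hnear : ∀ z ∈ closedBall z₀ r, ‖H (z + n) - G z‖ ≤ ε / 8 := by
    intro z hz
    have hzn : ‖z‖ ≤ ‖z₀‖ + 1 := by
      have := norm_le_norm_sub_add z z₀
      have := mem_closedBall_iff_norm.1 hz
      linarith
    have hGz : G z = ∑ j, if j ∈ J then c j * exp (b j * z) else 0 := by
      rw [hG, ← Finset.sum_filter]; simp
    rw [hGz, hH, ← Finset.sum_sub_distrib]
    refine (norm_sum_le _ _).trans (le_trans ?_ hKδ)
    rw [hKdef, Finset.sum_mul]
    refine Finset.sum_le_sum fun j _ => ?_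
    have hfac : ‖c j * exp (b j * z)‖ ≤ ‖c j‖ * Real.exp (‖b j‖ * (‖z₀‖ + 1)) := by
      rw [norm_mul]
      gcongr
      refine (norm_exp_le_exp_norm _).trans (Real.exp_le_exp.2 ?_)
      rw [norm_mul]
      gcongr
    have hsplit : c j * exp (b j * (z + n)) = c j * exp (b j * z) * exp (b j * n) := by
      rw [mul_add, exp_add]; ring
    rw [hsplit]
    split_ifs with hj
    · have hbj : b j = (b j).im * I := by
        apply Complex.ext <;> simp
        simpa [hJ] using hj
      have h1 := hn1 j
      rw [← hbj] at h1
      rw [← mul_sub_one, norm_mul]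
      gcongr
    · rw [sub_zero, norm_mul]
      gcongr
      exact (hn2 j hj).le
  set F : ℂ → ℂ := fun z => H (z + n) with hF
  have hFd : Differentiable ℂ F :=
    (differentiable_expSum Finset.univ b c).comp (differentiable_id.add_const (n : ℂ))
  have hFz₀ : ‖F z₀‖ ≤ ε / 8 := by
    simpa [hz₀] using hnear z₀ (mem_closedBall_self hr0.le)
  have hFs : ∀ z ∈ sphere z₀ r, ε / 2 ≤ ‖F z - F z₀‖ := by
    intro z hz
    have h1 := hεG z hz
    have h2 := hnear z (sphere_subset_closedBall hz)
    have h3 : ‖G z‖ ≤ ‖F z - F z₀‖ + ‖F z₀‖ + ‖F z - G z‖ := by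
      calc ‖G z‖ = ‖(F z - F z₀) + F z₀ - (F z - G z)‖ := by congr 1; ring
        _ ≤ _ := (norm_sub_le _ _).trans (by gcongr; exact norm_add_le _ _)
    linarith
  have hFne : ∃ᶠ z in 𝓝 z₀, F z ≠ F z₀ := by
    intro hev
    have hev' : F =ᶠ[𝓝 z₀] fun _ => F z₀ := hev.mono fun z hz => not_not.1 hz
    have hEq := (hFd.differentiableOn.analyticOnNhd isOpen_univ).eq_of_eventuallyEq
      (fun _ _ => analyticAt_const) hev'
    obtain ⟨w, hw⟩ := NormedSpace.sphere_nonempty (x := z₀).2 hr0.le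
    have := hFs w hw
    rw [congrFun hEq w, sub_self, norm_zero] at this
    linarith
  obtain ⟨z, hz, hz0⟩ := hFd.diffContOnCl.ball_subset_image_closedBall hr0 hFs hFne
    (show (0 : ℂ) ∈ ball (F z₀) (ε / 2 / 2) by
      rw [mem_ball_iff_norm, zero_sub, norm_neg]; linarith)
  have hzr : ‖z - z₀‖ ≤ 1 := (mem_closedBall_iff_norm.1 hz).trans hr1
  have hzim := (abs_im_le_norm (z - z₀)).trans hzr
  have hzre := (abs_re_le_norm (z - z₀)).trans hzr
  rw [sub_im] at hzim
  rw [sub_re] at hzre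
  refine ⟨z + n, ?_, ?_, hz0⟩
  · have := abs_sub_abs_le_abs_sub z.im z₀.im
    simp only [add_im, natCast_im, add_zero]
    linarith
  · have := (abs_le.1 hzre).1
    simp only [add_re, natCast_re]
    linarith

/-! ### Convex geometry of the exponents -/

/-- If the points do not all lie on one vertical line, their convex hull has a non-vertical
lower edge: some linear functional `w ↦ Re (w (t + i)) = t Re w - Im w` attains its maximum
over them at two points. -/
lemma exists_lower_edge {ι : Type*} [Fintype ι] (lam : ι → ℂ)
    (h : ∃ i j, (lam i).re ≠ (lam j).re) :
    ∃ (t : ℝ) (p q : ι), p ≠ q ∧ (∀ j, ((lam j - lam p) * (t + I)).re ≤ 0) ∧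
      ((lam q - lam p) * (t + I)).re = 0 := by
  classical
  obtain ⟨i₀, j₀, hij⟩ := h
  -- `p` is the lowest among the rightmost points.
  obtain ⟨m, -, hm⟩ := Finset.exists_max_image Finset.univ (fun j => (lam j).re)
    ⟨i₀, Finset.mem_univ _⟩
  obtain ⟨p, hp, hpmin⟩ := Finset.exists_min_image
    (Finset.univ.filter fun j => (lam j).re = (lam m).re) (fun j => (lam j).im) ⟨m, by simp⟩
  simp only [Finset.mem_filter, Finset.mem_univ, true_and, forall_const] at hp hpmin hm
  have hre : ∀ j, (lam j).re ≤ (lam p).re := fun j => (hm j).trans_eq hp.symm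
  have hL : (Finset.univ.filter fun j => (lam j).re < (lam p).re).Nonempty := by
    by_contra hemp
    rw [Finset.not_nonempty_iff_eq_empty, Finset.filter_eq_empty_iff] at hemp
    have hall : ∀ j, (lam j).re = (lam p).re := fun j =>
      le_antisymm (hre j) (not_lt.1 (hemp (Finset.mem_univ j)))
    exact hij ((hall i₀).trans (hall j₀).symm)
  -- The edge leaves `p` towards the point that maximizes the slope.
  obtain ⟨q, hq, hqmax⟩ := Finset.exists_max_image _
    (fun j => ((lam p).im - (lam j).im) / ((lam p).re - (lam j).re)) hL
  simp only [Finset.mem_filter, Finset.mem_univ, true_and] at hq hqmax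
  have hform : ∀ (t : ℝ) (w : ℂ), (w * (t + I)).re = t * w.re - w.im := fun t w => by
    simp [mul_comm]
  refine ⟨((lam p).im - (lam q).im) / ((lam p).re - (lam q).re), p, q, ?_, fun j => ?_, ?_⟩
  · rintro rfl
    exact lt_irrefl _ hq
  · rw [hform, sub_re, sub_im]
    rcases (hre j).lt_or_eq with hj | hj
    · have := hqmax j hj
      rw [div_le_iff₀ (by linarith)] at this
      linarith
    · rw [hj, sub_self, mul_zero]
      linarith [hpmin j (hj.trans hp)]
  · rw [hform, sub_re, sub_im]
    have : (lam p).re - (lam q).re ≠ 0 := by linarith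
    field_simp
    ring

/-- The exponents of a real-rooted exponential sum lie on one vertical line. -/
lemma re_eq_of_realRooted {ι : Type*} [Fintype ι] (c lam : ι → ℂ) (hc : ∀ j, c j ≠ 0)
    (hlam : Function.Injective lam)
    (hroot : ∀ z : ℂ, (∑ j, c j * exp (lam j * z)) = 0 → z.im = 0) (i j : ι) :
    (lam i).re = (lam j).re := by
  by_contra hne
  obtain ⟨t, p, q, hpq, hle, heq⟩ := exists_lower_edge lam ⟨i, j, hne⟩
  have hu : (t + I : ℂ) ≠ 0 := fun h => by simpa using congrArg im h
  obtain ⟨B, hB⟩ := exists_zero_far_right (fun j => (lam j - lam p) * (t + I)) c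
    (fun x y hxy => hlam (sub_left_injective (mul_right_cancel₀ hu hxy))) hc hle
    ⟨p, q, hpq, by simp, heq⟩
  obtain ⟨z, hzB, hzT, hz⟩ := hB (|t| * B + 1)
  have hzero : ∑ j, c j * exp (lam j * ((t + I) * z)) = 0 := by
    rw [← mul_zero (exp (lam p * ((t + I) * z))), ← hz, Finset.mul_sum]
    refine Finset.sum_congr rfl fun j _ => ?_
    rw [mul_left_comm (exp (lam p * _)), ← exp_add]
    congr 2
    ring
  have him : ((t + I) * z).im = t * z.im + z.re := by simp
  have h0 := hroot _ hzero
  rw [him] at h0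
  have h1 : -(|t| * B) ≤ t * z.im := by
    refine (neg_le_neg ?_).trans (neg_abs_le _)
    rw [abs_mul]
    gcongr
  linarith

theorem stmt_3 (s : ℕ) (c : Fin (s + 1) → ℂ) (lam : Fin (s + 1) → ℂ)
    (hc : ∀ j, c j ≠ 0) (hlam : Function.Injective lam)
    (hmin : ∀ j, (lam 0).im ≤ (lam j).im)
    (hroot : ∀ z : ℂ, (∑ j, c j * Complex.exp (lam j * z)) = 0 → z.im = 0) :
    ∃ ω : Fin s → ℝ, (∀ j, 0 < ω j) ∧ (∀ j, lam j.succ = lam 0 + Complex.I * (ω j : ℂ)) ∧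
      ∀ x : ℂ, (∑ j, c j * Complex.exp (lam j * x)) =
        Complex.exp (lam 0 * x) *
          (c 0 + ∑ j : Fin s, c j.succ * Complex.exp (Complex.I * (ω j : ℂ) * x)) := by
  have hre := re_eq_of_realRooted c lam hc hlam hroot
  have hform : ∀ j : Fin s,
      lam j.succ = lam 0 + I * (((lam j.succ).im - (lam 0).im : ℝ) : ℂ) := fun j => by
    apply Complex.ext
    · simpa using hre j.succ 0
    · simp
  refine ⟨fun j => (lam j.succ).im - (lam 0).im, fun j => ?_, hform, fun x => ?_⟩
  · refine sub_pos.2 (lt_of_le_of_ne (hmin j.succ) fun h => ?_)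
    exact Fin.succ_ne_zero j (hlam (Complex.ext (hre j.succ 0) h.symm))
  · rw [Fin.sum_univ_succ, mul_add, Finset.mul_sum, mul_comm (c 0)]
    congr 1
    refine Finset.sum_congr rfl fun j _ => ?_
    rw [mul_left_comm, ← exp_add, ← add_mul, ← hform j]
end

section
/- Let f(x) = c_0 + Σ_{j=1}^{s} c_j e^{i ω_j x} where c_0, …, c_s are nonzero complex numbers and ω_1, …, ω_s are strictly positive real numbers, and let n = dim_ℚ{ω_1, …, ω_s}. Then there exist a polynomial p ∈ ℂ[z_1, …, z_n] with p(0) = c_0 ≠ 0 and a vector ℓ ∈ ℝ_+^n whose entries are ℚ-linearly independent such that f(x) = p(e^{i x ℓ_1}, …, e^{i x ℓ_n}) for all x ∈ ℂ. -/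
/-!
The frequencies `ω j` lie in a `ℚ`-vector space of dimension `n`. The point is to find `n` positive
reals `ℓ k` such that every `ω j` is a combination of the `ℓ k` with coefficients in `ℕ`; then
`exp (i ω_j x)` is a monomial in the `exp (i ℓ_k x)`, and it is not the constant monomial because
`ω j ≠ 0`, so the resulting polynomial takes the value `c 0` at the origin. Such `ℓ k` are
automatically `ℚ`-linearly independent: their span contains the `n`-dimensional span of the `ω j`.

To find them (`exists_pos_cone`), start with `ω j = ∑ k, a j k * b k`, where `b` is a basis with
`0 < b 0`. For `k ≠ 0` replace `b k` by `δ k = b k - r k * b 0`, with `r k` rational and `δ k`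
positive and tiny. The coefficient of `b 0` in `ω j` becomes close to `ω j / b 0`, hence positive.
Then replace `b 0` by `b 0 - M * ∑ k, δ k`, still positive as the `δ k` are tiny: this raises the
coefficient of every `δ k` by about `M * (ω j / b 0)`, so for `M` large all of them are nonnegative.
Clearing denominators (`exists_pos_nat_cone`) makes the coefficients natural numbers.
-/

open MvPolynomial Complex

/-- Finitely many positive rational combinations of the `b k` lie in a simplicial cone over the
nonnegative rationals, spanned by as many positive reals as there are `b k`. -/
lemma exists_pos_cone {s m : ℕ} (b : Fin (m + 1) → ℝ) (hb : 0 < b 0)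
    (a : Fin s → Fin (m + 1) → ℚ) (w : Fin s → ℝ) (hw : ∀ j, 0 < w j)
    (h : ∀ j, w j = ∑ k, (a j k : ℝ) * b k) :
    ∃ (l : Fin (m + 1) → ℝ) (A : Fin s → Fin (m + 1) → ℚ), (∀ k, 0 < l k) ∧
      (∀ j k, 0 ≤ A j k) ∧ ∀ j, w j = ∑ k, (A j k : ℝ) * l k := by
  obtain ⟨M, hM0, hM⟩ : ∃ M : ℚ, 0 ≤ M ∧
      ∀ j k, 0 ≤ (a j k : ℝ) + M * (w j / (2 * b 0)) := by
    obtain ⟨M', hM'⟩ := Finite.exists_le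
      (fun p : Fin s × Fin (m + 1) => -(a p.1 p.2 : ℝ) / (w p.1 / (2 * b 0)))
    obtain ⟨M, hM⟩ := exists_rat_gt (max M' 0)
    refine ⟨M, ?_, fun j k => ?_⟩
    · exact_mod_cast (lt_of_le_of_lt (le_max_right _ _) hM).le
    · have h1 := (hM' (j, k)).trans ((le_max_left _ _).trans hM.le)
      have h2 : 0 < w j / (2 * b 0) := by have := hw j; positivity
      rw [div_le_iff₀ h2] at h1
      simp only at h1
      linarith
  obtain ⟨ε, hε, hε1, hε2⟩ : ∃ ε : ℝ, 0 < ε ∧ (M * (m * ε) : ℝ) < b 0 ∧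
      ∀ j, (∑ k : Fin m, |(a j k.succ : ℝ)|) * ε < w j / 2 := by
    have e1 : ∀ᶠ ε : ℝ in nhdsWithin 0 (Set.Ioi 0), (M * (m * ε) : ℝ) < b 0 := by
      refine Filter.Eventually.filter_mono nhdsWithin_le_nhds ?_
      have : ContinuousAt (fun ε : ℝ => (M * (m * ε) : ℝ)) 0 := by fun_prop
      exact this.eventually_lt continuousAt_const (by simpa using hb)
    have e2 : ∀ᶠ ε : ℝ in nhdsWithin 0 (Set.Ioi 0),
        ∀ j, (∑ k : Fin m, |(a j k.succ : ℝ)|) * ε < w j / 2 := by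
      refine Filter.Eventually.filter_mono nhdsWithin_le_nhds ?_
      rw [Filter.eventually_all]
      intro j
      have : ContinuousAt (fun ε : ℝ => (∑ k : Fin m, |(a j k.succ : ℝ)|) * ε) 0 := by fun_prop
      exact this.eventually_lt continuousAt_const (by simpa using hw j)
    obtain ⟨ε, h0, h1, h2⟩ := (eventually_mem_nhdsWithin.and (e1.and e2)).exists
    exact ⟨ε, h0, h1, h2⟩
  have hr : ∀ k : Fin m, ∃ r : ℚ, 0 < b k.succ - r * b 0 ∧ b k.succ - r * b 0 < ε := by
    intro k
    obtain ⟨r, h1, h2⟩ := exists_rat_btwn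
      (show (b k.succ - ε) / b 0 < b k.succ / b 0 by gcongr; linarith)
    rw [div_lt_iff₀ hb] at h1
    rw [lt_div_iff₀ hb] at h2
    exact ⟨r, by linarith, by linarith⟩
  choose r hr0 hr1 using hr
  set δ : Fin m → ℝ := fun k => b k.succ - r k * b 0 with hδ
  set B : Fin s → ℚ := fun j => a j 0 + ∑ k : Fin m, a j k.succ * r k with hB
  have hwB : ∀ j, w j = B j * b 0 + ∑ k : Fin m, (a j k.succ : ℝ) * δ k := by
    intro j
    rw [h j, Fin.sum_univ_succ]
    simp only [hB, hδ]
    push_cast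
    rw [add_mul, Finset.sum_mul, add_assoc, ← Finset.sum_add_distrib]
    congr 1
    exact Finset.sum_congr rfl fun k _ => by ring
  have hBpos : ∀ j, w j / (2 * b 0) ≤ B j := by
    intro j
    have h1 : ∑ k : Fin m, (a j k.succ : ℝ) * δ k ≤ (∑ k : Fin m, |(a j k.succ : ℝ)|) * ε := by
      rw [Finset.sum_mul]
      refine Finset.sum_le_sum fun k _ => ?_
      exact mul_le_mul (le_abs_self _) (hr1 k).le (hr0 k).le (abs_nonneg _)
    rw [div_le_iff₀ (by positivity)]
    have := hwB j
    have := hε2 j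
    linarith
  have hB0 : ∀ j, (0 : ℝ) ≤ B j := fun j =>
    le_trans (by have := hw j; positivity) (hBpos j)
  refine ⟨Fin.cons (b 0 - M * ∑ k, δ k) δ,
    fun j => Fin.cons (B j) (fun k => a j k.succ + B j * M), ?_, ?_, ?_⟩
  · intro k
    refine Fin.cases ?_ (fun k => ?_) k
    · have h1 : ∑ k, δ k ≤ m * ε := by
        calc ∑ k, δ k ≤ ∑ _k : Fin m, ε := Finset.sum_le_sum fun k _ => (hr1 k).le
          _ = m * ε := by simp
      have h2 : (M : ℝ) * ∑ k, δ k ≤ M * (m * ε) :=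
        mul_le_mul_of_nonneg_left h1 (by exact_mod_cast hM0)
      simp only [Fin.cons_zero]
      linarith
    · simp only [Fin.cons_succ]
      exact hr0 k
  · intro j k
    refine Fin.cases ?_ (fun k => ?_) k
    · simpa using hB0 j
    · simp only [Fin.cons_succ]
      have h1 := hM j k.succ
      have h2 : (M : ℝ) * (w j / (2 * b 0)) ≤ M * B j :=
        mul_le_mul_of_nonneg_left (hBpos j) (by exact_mod_cast hM0)
      have h3 : (0 : ℝ) ≤ a j k.succ + B j * M := by linarith
      exact_mod_cast h3
  · intro j
    rw [Fin.sum_univ_succ]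
    simp only [Fin.cons_zero, Fin.cons_succ]
    push_cast
    rw [hwB j]
    simp only [add_mul, Finset.sum_add_distrib, mul_assoc, ← Finset.mul_sum]
    ring

/-- Finitely many positive reals are combinations with coefficients in `ℕ` of `n` positive reals,
where `n` is the dimension of their `ℚ`-span. -/
lemma exists_pos_nat_cone {s : ℕ} (w : Fin s → ℝ) (hw : ∀ j, 0 < w j) (n : ℕ)
    (hn : n = Module.finrank ℚ (Submodule.span ℚ (Set.range w))) :
    ∃ (l : Fin n → ℝ) (N : Fin s → Fin n → ℕ), (∀ k, 0 < l k) ∧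
      ∀ j, w j = ∑ k, (N j k : ℝ) * l k := by
  have : FiniteDimensional ℚ (Submodule.span ℚ (Set.range w)) :=
    FiniteDimensional.span_of_finite ℚ (Set.finite_range w)
  let β := Module.finBasisOfFinrankEq ℚ (Submodule.span ℚ (Set.range w)) hn.symm
  let v : Fin s → Submodule.span ℚ (Set.range w) :=
    fun j => ⟨w j, Submodule.subset_span (Set.mem_range_self j)⟩
  have hrep : ∀ j, w j = ∑ k, (β.repr (v j) k : ℝ) * (β k : ℝ) := by
    intro j
    calc w j = (Submodule.span ℚ (Set.range w)).subtype (v j) := rfl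
      _ = (Submodule.span ℚ (Set.range w)).subtype (∑ k, β.repr (v j) k • β k) := by
        rw [β.sum_repr]
      _ = _ := by simp only [map_sum, map_smul, Rat.smul_def, Submodule.subtype_apply]
  rcases n with _ | m
  · refine ⟨fun _ => 1, fun _ _ => 0, fun k => k.elim0, fun j => ?_⟩
    simpa using hrep j
  have hβ : (β 0 : ℝ) ≠ 0 := by simpa using β.ne_zero 0
  obtain ⟨l, A, hl, hA, hwA⟩ : ∃ (l : Fin (m + 1) → ℝ) (A : Fin s → Fin (m + 1) → ℚ),
      (∀ k, 0 < l k) ∧ (∀ j k, 0 ≤ A j k) ∧ ∀ j, w j = ∑ k, (A j k : ℝ) * l k := by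
    rcases hβ.lt_or_gt with h0 | h0
    -- Negating the whole basis makes its first vector positive.
    · exact exists_pos_cone (fun k => -(β k : ℝ)) (by linarith) (fun j k => -β.repr (v j) k) w hw
        (fun j => by simpa using hrep j)
    · exact exists_pos_cone (fun k => (β k : ℝ)) h0 (fun j k => β.repr (v j) k) w hw hrep
  let D : ℕ := ∏ p : Fin s × Fin (m + 1), (A p.1 p.2).den
  have hD : 0 < D := Finset.prod_pos fun p _ => (A p.1 p.2).den_pos
  have hN : ∀ j k, ∃ N : ℕ, (N : ℝ) = A j k * D := by
    intro j k
    obtain ⟨e, he⟩ : (A j k).den ∣ D :=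
      Finset.dvd_prod_of_mem (fun p : Fin s × Fin (m + 1) => (A p.1 p.2).den)
        (Finset.mem_univ (j, k))
    refine ⟨(A j k).num.toNat * e, ?_⟩
    have h1 : (((A j k).num.toNat : ℤ)) = (A j k).num :=
      Int.toNat_of_nonneg (Rat.num_nonneg.2 (hA j k))
    have h2 : (((A j k).num.toNat : ℕ) : ℚ) = (A j k).num := by exact_mod_cast h1
    have h3 : (((A j k).num.toNat * e : ℕ) : ℚ) = A j k * D := by
      rw [he]
      push_cast
      rw [h2, ← mul_assoc, Rat.mul_den_eq_num]
    exact_mod_cast h3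
  choose N hN using hN
  have hD' : (0 : ℝ) < D := by exact_mod_cast hD
  refine ⟨fun k => l k / D, N, fun k => div_pos (hl k) hD', fun j => ?_⟩
  rw [hwA j]
  refine Finset.sum_congr rfl fun k _ => ?_
  rw [hN]
  field_simp

theorem stmt_4 (s : ℕ) (c : Fin (s + 1) → ℂ) (ω : Fin s → ℝ)
    (hc : ∀ j, c j ≠ 0) (hω : ∀ j, 0 < ω j)
    (n : ℕ)
    (hn : n = Module.finrank ℚ (Submodule.span ℚ (Set.range ω))) :
    ∃ (p : MvPolynomial (Fin n) ℂ) (ℓ : Fin n → ℝ),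
      eval (0 : Fin n → ℂ) p = c 0 ∧ eval (0 : Fin n → ℂ) p ≠ 0 ∧
      (∀ k, 0 < ℓ k) ∧ LinearIndependent ℚ ℓ ∧
      ∀ x : ℂ, (c 0 + ∑ j : Fin s, c j.succ * Complex.exp (Complex.I * (ω j : ℂ) * x)) =
        eval (fun k => Complex.exp (Complex.I * x * (ℓ k : ℂ))) p := by
  obtain ⟨l, N, hl, hN⟩ := exists_pos_nat_cone ω hω n hn
  have h0 : eval (0 : Fin n → ℂ)
      (C (c 0) + ∑ j : Fin s, C (c j.succ) * ∏ k, X k ^ N j k) = c 0 := by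
    simp only [map_add, map_sum, map_mul, map_prod, map_pow, eval_C, eval_X, Pi.zero_apply]
    rw [add_eq_left]
    refine Finset.sum_eq_zero fun j _ => ?_
    -- Some exponent is nonzero, for otherwise `ω j = 0`.
    obtain ⟨k, hk⟩ : ∃ k, N j k ≠ 0 := by
      by_contra! hall
      have h1 := hN j
      simp only [hall, Nat.cast_zero, zero_mul, Finset.sum_const_zero] at h1
      exact (hω j).ne' h1
    rw [Finset.prod_eq_zero (Finset.mem_univ k) (zero_pow hk), mul_zero]
  refine ⟨C (c 0) + ∑ j : Fin s, C (c j.succ) * ∏ k, X k ^ N j k, l, h0, ?_, hl, ?_, ?_⟩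
  · rw [h0]
    exact hc 0
  · rw [linearIndependent_iff_card_le_finrank_span, Fintype.card_fin, Set.finrank]
    have : FiniteDimensional ℚ (Submodule.span ℚ (Set.range l)) :=
      FiniteDimensional.span_of_finite ℚ (Set.finite_range l)
    refine hn.le.trans (Submodule.finrank_mono ?_)
    rw [Submodule.span_le]
    rintro _ ⟨j, rfl⟩
    rw [hN j]
    refine Submodule.sum_mem _ fun k _ => ?_
    rw [← nsmul_eq_mul]
    exact Submodule.smul_of_tower_mem _ _ (Submodule.subset_span (Set.mem_range_self k))
  · intro x
    simp only [map_add, map_sum, map_mul, map_prod, map_pow, eval_C, eval_X]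
    congr 1
    refine Finset.sum_congr rfl fun j _ => ?_
    congr 1
    simp only [← Complex.exp_nat_mul]
    rw [← Complex.exp_sum, hN j]
    push_cast
    rw [Finset.mul_sum, Finset.sum_mul]
    congr 1
    exact Finset.sum_congr rfl fun k _ => by ring
end

section
/- Let p ∈ ℂ[z_1, …, z_n] be a nonzero polynomial, let ℓ ∈ ℝ^n have ℚ-linearly independent entries, and let β be the unique point of Newt(p) ∩ ℤ^n maximizing α ↦ ⟨α, ℓ⟩ over Newt(p). Suppose the open ray ℝ_+ℓ = {tℓ : t > 0} is disjoint from the amoeba 𝒜(p), and let E be the connected component of the complement ℝ^n \ 𝒜(p) containing ℝ_+ℓ. Then the interior of the normal cone 𝒩_β = {w ∈ ℝ^n : ⟨β, w⟩ = max_{α ∈ Newt(p)} ⟨α, w⟩} is contained in E. -/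
/-!
Write `⟨β - α, w⟩` for the *gap* of an exponent `α` in direction `w`. For `v` in the interior of the
normal cone of `β`, every exponent `α ≠ β` of `p` has a positive gap in direction `v`, and rational
independence of `ℓ` gives the same in direction `ℓ`. Hence the sum

`H(τ, u, y) = ∑ c_α τ ^ ⟨β - α, ℓ⟩ u ^ ⟨β - α, v⟩ y ^ α`

(`scaledSum`) is continuous for real `τ, u`, including at `0`, and `y` in the compact torus. For `τ = e^{-t}`,
`u = e^{-s}` it is, up to a nonzero factor, the value of `p` at `e^{tℓ + sv} y`
(`eval_eq_scaledSum`). Putting `τ = 0` or `u = 0` leaves only the term of `β`, so `H` does not vanish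
there (`scaledSum_zero`, `scaledSum_zero'`); at `u = 1` it does not vanish for `0 < τ < 1`, because
the ray avoids the amoeba.

Call `τ ∈ [0, 1)` good if `H(τ, u, y) ≠ 0` for all `u ∈ [0, 1]` and all `y`. The value `0` is good,
and goodness is an open condition since the torus and `[0, 1]` are compact. It is also closed: for
good `τ`, the Phragmén–Lindelöf principle applied to `s ↦ 1 / H(τ, e^{-s}, y)` on the right half-plane
shows that a lower bound for `|H|` on the torus at `u = 1` persists for all `u ∈ (0, 1]`
(`le_norm_scaledSum`), and this bound passes to limits in `τ`. So every `τ ∈ [0, 1)` is good, i.e.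
`tℓ + sv` avoids the amoeba for all `t > 0` and `s ≥ 0`. Finally a point `w` in the interior of the
normal cone is `εℓ + v` with `v` still in the interior, and `{tℓ + sv : t > 0, s ≥ 0}` is a connected
set containing `ℓ` and `w` and avoiding the amoeba.
-/

open MvPolynomial

/-- The Newton polytope of a polynomial: the convex hull (in `ℝ^n`) of its support. -/
def NewtonPolytope {n : ℕ} (p : MvPolynomial (Fin n) ℂ) : Set (Fin n → ℝ) :=
  convexHull ℝ ((fun α : Fin n →₀ ℕ => fun i => (α i : ℝ)) '' ↑p.support)

/-- The amoeba of a polynomial. -/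
def Amoeba {n : ℕ} (p : MvPolynomial (Fin n) ℂ) : Set (Fin n → ℝ) :=
  {x | ∃ θ : Fin n → ℝ,
    eval (fun j => Complex.exp ((x j : ℂ) + (θ j : ℂ) * Complex.I)) p = 0}

open Set Filter Topology

/-- The pairing `⟨β - α, w⟩`: how much the exponent `β` beats `α` in direction `w`. -/
def gap {n : ℕ} (β w : Fin n → ℝ) (α : Fin n →₀ ℕ) : ℝ := ∑ i, (β i - α i) * w i

lemma gap_eq {n : ℕ} (β w : Fin n → ℝ) (α : Fin n →₀ ℕ) :
    gap β w α = ∑ i, β i * w i - ∑ i, (α i : ℝ) * w i := by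
  simp [gap, sub_mul, Finset.sum_sub_distrib]

/-- The polynomial `p` at `e^{tℓ + sv} y`, divided by `e^{⟨β, tℓ + sv⟩}`, in the variables
`τ = e^{-t}` and `u = e^{-s}`, which makes sense also for `τ = 0` and `u = 0`. -/
noncomputable def scaledSum {n : ℕ} (p : MvPolynomial (Fin n) ℂ) (β ℓ v : Fin n → ℝ)
    (τ u : ℝ) (y : Fin n → Circle) : ℂ :=
  ∑ α ∈ p.support, coeff α p * ((τ ^ gap β ℓ α : ℝ) : ℂ) * ((u ^ gap β v α : ℝ) : ℂ) *
    ∏ i, (y i : ℂ) ^ α i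

/-- `scaledSum` with `u = e^{-s}` for complex `s`. -/
noncomputable def scaledExpSum {n : ℕ} (p : MvPolynomial (Fin n) ℂ) (β ℓ v : Fin n → ℝ)
    (τ : ℝ) (s : ℂ) (y : Fin n → Circle) : ℂ :=
  ∑ α ∈ p.support, coeff α p * ((τ ^ gap β ℓ α : ℝ) : ℂ) * Complex.exp (-s * gap β v α) *
    ∏ i, (y i : ℂ) ^ α i

lemma exp_neg_rpow (s d : ℝ) : Real.exp (-s) ^ d = Real.exp (-s * d) := by
  rw [← Real.exp_mul]

lemma eval_eq_scaledSum {n : ℕ} (p : MvPolynomial (Fin n) ℂ) (β ℓ v : Fin n → ℝ)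
    (t s : ℝ) (θ : Fin n → ℝ) :
    eval (fun j => Complex.exp (((t • ℓ + s • v) j : ℂ) + (θ j : ℂ) * Complex.I)) p =
      Complex.exp ((∑ i, β i * (t • ℓ + s • v) i : ℝ) : ℂ) *
      scaledSum p β ℓ v (Real.exp (-t)) (Real.exp (-s)) (fun i => Circle.exp (θ i)) := by
  rw [eval_eq', scaledSum, Finset.mul_sum]
  refine Finset.sum_congr rfl fun α _ => ?_
  rw [exp_neg_rpow, exp_neg_rpow]
  have h1 : ∏ i, Complex.exp (((t • ℓ + s • v) i : ℂ) + (θ i : ℂ) * Complex.I) ^ α i =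
      Complex.exp ((∑ i, (α i : ℝ) * (t • ℓ + s • v) i : ℝ) : ℂ) *
        ∏ i, ((Circle.exp (θ i) : Circle) : ℂ) ^ α i := by
    push_cast
    rw [Complex.exp_sum, ← Finset.prod_mul_distrib]
    refine Finset.prod_congr rfl fun i _ => ?_
    rw [Complex.exp_add, mul_pow, ← Complex.exp_nat_mul]
  have h2 : (∑ i, (α i : ℝ) * (t • ℓ + s • v) i : ℝ) =
      (∑ i, β i * (t • ℓ + s • v) i) + (-t * gap β ℓ α) + (-s * gap β v α) := by
    simp only [gap, Finset.mul_sum, ← Finset.sum_add_distrib]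
    refine Finset.sum_congr rfl fun i _ => ?_
    simp only [Pi.add_apply, Pi.smul_apply, smul_eq_mul]
    ring
  rw [h1, h2, Complex.ofReal_add, Complex.ofReal_add, Complex.exp_add, Complex.exp_add,
    Complex.ofReal_exp, Complex.ofReal_exp]
  ring

/-- The imaginary part of `s` only rotates the point `y` of the torus. -/
lemma norm_scaledExpSum {n : ℕ} (p : MvPolynomial (Fin n) ℂ) (β ℓ v : Fin n → ℝ)
    (τ : ℝ) (s : ℂ) (y : Fin n → Circle) :
    ‖scaledExpSum p β ℓ v τ s y‖ =
      ‖scaledSum p β ℓ v τ (Real.exp (-s.re)) (fun i => y i * Circle.exp (s.im * v i))‖ := by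
  have key : scaledSum p β ℓ v τ (Real.exp (-s.re)) (fun i => y i * Circle.exp (s.im * v i)) =
      Complex.exp (((s.im * ∑ i, β i * v i : ℝ) : ℂ) * Complex.I) *
        scaledExpSum p β ℓ v τ s y := by
    rw [scaledSum, scaledExpSum, Finset.mul_sum]
    refine Finset.sum_congr rfl fun α _ => ?_
    have h1 : ∏ i, ((y i * Circle.exp (s.im * v i) : Circle) : ℂ) ^ α i =
        (∏ i, (y i : ℂ) ^ α i) *
          Complex.exp (((s.im * ∑ i, (α i : ℝ) * v i : ℝ) : ℂ) * Complex.I) := by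
      rw [Finset.mul_sum]
      push_cast
      rw [Finset.sum_mul, Complex.exp_sum, ← Finset.prod_mul_distrib]
      refine Finset.prod_congr rfl fun i _ => ?_
      rw [mul_pow, ← Complex.exp_nat_mul]
      congr 2
      ring
    have h2 : Complex.exp ((-s.re * gap β v α : ℝ) : ℂ) *
        Complex.exp (((s.im * ∑ i, (α i : ℝ) * v i : ℝ) : ℂ) * Complex.I) =
        Complex.exp (((s.im * ∑ i, β i * v i : ℝ) : ℂ) * Complex.I) *
          Complex.exp (-s * gap β v α) := by
      rw [← Complex.exp_add, ← Complex.exp_add]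
      congr 1
      rw [gap_eq]
      push_cast
      linear_combination (-(∑ i, (β i : ℂ) * v i) + ∑ i, (α i : ℂ) * v i) * Complex.re_add_im s
    rw [h1, exp_neg_rpow, Complex.ofReal_exp]
    linear_combination (coeff α p * ((τ ^ gap β ℓ α : ℝ) : ℂ) * ∏ i, (y i : ℂ) ^ α i) * h2
  rw [key, norm_mul, Complex.norm_exp_ofReal_mul_I, one_mul]

lemma continuous_scaledSum {n : ℕ} (p : MvPolynomial (Fin n) ℂ) (β ℓ v : Fin n → ℝ)
    (hℓ : ∀ α ∈ p.support, 0 ≤ gap β ℓ α) (hv : ∀ α ∈ p.support, 0 ≤ gap β v α) :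
    Continuous fun q : ℝ × ℝ × (Fin n → Circle) => scaledSum p β ℓ v q.1 q.2.1 q.2.2 := by
  unfold scaledSum
  refine continuous_finsetSum _ fun α hα => ?_
  have h1 := Real.continuous_rpow_const (hℓ α hα)
  have h2 := Real.continuous_rpow_const (hv α hα)
  have h3 : Continuous fun q : ℝ × ℝ × (Fin n → Circle) => q.1 ^ gap β ℓ α :=
    h1.comp continuous_fst
  have h4 : Continuous fun q : ℝ × ℝ × (Fin n → Circle) => q.2.1 ^ gap β v α :=
    h2.comp (continuous_fst.comp continuous_snd)
  fun_prop

/-- Positivity of the gaps away from `b` leaves only the term of `b` at `u = 0`. -/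
lemma scaledSum_zero' {n : ℕ} (p : MvPolynomial (Fin n) ℂ) (β ℓ v : Fin n → ℝ)
    (b : Fin n →₀ ℕ) (hb : b ∈ p.support) (hbβ : ∀ i, (b i : ℝ) = β i)
    (hv : ∀ α ∈ p.support, α ≠ b → 0 < gap β v α) (τ : ℝ) (y : Fin n → Circle) :
    scaledSum p β ℓ v τ 0 y ≠ 0 := by
  have hgb : ∀ w, gap β w b = 0 := fun w => by simp [gap, hbβ]
  rw [scaledSum, Finset.sum_eq_single_of_mem b hb]
  · have : coeff b p ≠ 0 := by simpa using hb
    simp [hgb, this, Finset.prod_ne_zero_iff]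
  · intro α hα hne
    rw [Real.zero_rpow (hv α hα hne).ne']
    simp

lemma scaledSum_zero {n : ℕ} (p : MvPolynomial (Fin n) ℂ) (β ℓ v : Fin n → ℝ)
    (b : Fin n →₀ ℕ) (hb : b ∈ p.support) (hbβ : ∀ i, (b i : ℝ) = β i)
    (hℓ : ∀ α ∈ p.support, α ≠ b → 0 < gap β ℓ α) (u : ℝ) (y : Fin n → Circle) :
    scaledSum p β ℓ v 0 u y ≠ 0 := by
  have : scaledSum p β ℓ v 0 u y = scaledSum p β v ℓ u 0 y := by
    refine Finset.sum_congr rfl fun α _ => ?_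
    ring
  rw [this]
  exact scaledSum_zero' p β v ℓ b hb hbβ hℓ u y

/-- Minimum principle: if `scaledSum` has no zeros for `u ∈ [0, 1]`, a lower bound for its modulus
over the torus at `u = 1` holds for all `u ∈ (0, 1]`. -/
lemma le_norm_scaledSum {n : ℕ} (p : MvPolynomial (Fin n) ℂ) (β ℓ v : Fin n → ℝ)
    (hℓ : ∀ α ∈ p.support, 0 ≤ gap β ℓ α) (hv : ∀ α ∈ p.support, 0 ≤ gap β v α)
    (τ : ℝ) (hne : ∀ u ∈ Icc (0 : ℝ) 1, ∀ y, scaledSum p β ℓ v τ u y ≠ 0)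
    (m : ℝ) (hm : 0 < m) (hm1 : ∀ y, m ≤ ‖scaledSum p β ℓ v τ 1 y‖)
    (u : ℝ) (hu : u ∈ Ioc (0 : ℝ) 1) (y : Fin n → Circle) :
    m ≤ ‖scaledSum p β ℓ v τ u y‖ := by
  obtain ⟨δ, hδ, hδle⟩ : ∃ δ > 0, ∀ u ∈ Icc (0 : ℝ) 1, ∀ y, δ ≤ ‖scaledSum p β ℓ v τ u y‖ := by
    have hc : Continuous fun q : ℝ × (Fin n → Circle) => ‖scaledSum p β ℓ v τ q.1 q.2‖ :=
      ((continuous_scaledSum p β ℓ v hℓ hv).comp (Continuous.prodMk_right τ)).norm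
    have hK : IsCompact (Icc (0 : ℝ) 1 ×ˢ (univ : Set (Fin n → Circle))) :=
      isCompact_Icc.prod isCompact_univ
    obtain ⟨q, hq, hmin⟩ := hK.exists_isMinOn ⟨(0, 1), by simp⟩ hc.continuousOn
    exact ⟨_, norm_pos_iff.2 (hne q.1 hq.1 q.2), fun u hu y => hmin (a := (u, y)) ⟨hu, mem_univ y⟩⟩
  have hexp : ∀ s : ℂ, 0 ≤ s.re → Real.exp (-s.re) ∈ Icc (0 : ℝ) 1 := fun s hs =>
    ⟨(Real.exp_pos _).le, Real.exp_le_one_iff.2 (by linarith)⟩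
  have hne' : ∀ s : ℂ, 0 ≤ s.re → scaledExpSum p β ℓ v τ s y ≠ 0 := fun s hs => by
    rw [← norm_pos_iff, norm_scaledExpSum, norm_pos_iff]
    exact hne _ (hexp s hs) _
  have hbd : ∀ s : ℂ, 0 ≤ s.re → ‖(scaledExpSum p β ℓ v τ s y)⁻¹‖ ≤ δ⁻¹ := fun s hs => by
    rw [norm_inv, norm_scaledExpSum]
    exact inv_anti₀ hδ (hδle _ (hexp s hs) _)
  have hdiff : Differentiable ℂ fun s => scaledExpSum p β ℓ v τ s y := by
    unfold scaledExpSum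
    fun_prop
  have hcl : closure {s : ℂ | 0 < s.re} = {s : ℂ | 0 ≤ s.re} := Complex.closure_setOfPred_lt_re 0
  have hPL := PhragmenLindelof.right_half_plane_of_bounded_on_real
    (f := fun s => (scaledExpSum p β ℓ v τ s y)⁻¹) (C := m⁻¹) (z := ((-Real.log u : ℝ) : ℂ))
    (DifferentiableOn.diffContOnCl fun s hs => by
      rw [hcl] at hs
      exact ((hdiff s).inv (hne' s hs)).differentiableWithinAt)
    ⟨1, by norm_num, 0, by
      refine Asymptotics.IsBigO.of_bound δ⁻¹ ?_
      filter_upwards [mem_inf_of_right (mem_principal_self _)] with s hs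
      simpa using hbd s (le_of_lt hs)⟩
    ⟨δ⁻¹, by
      rw [eventually_map]
      filter_upwards [eventually_ge_atTop 0] with x hx
      exact hbd x (by simpa using hx)⟩
    (fun x => by
      rw [norm_inv, norm_scaledExpSum]
      refine inv_anti₀ hm ?_
      simpa using hm1 _)
    (by simpa using Real.log_nonpos hu.1.le hu.2)
  rw [norm_inv, norm_scaledExpSum] at hPL
  have := (inv_le_inv₀ (by
    rw [norm_pos_iff]
    exact hne _ (hexp _ (by simpa using Real.log_nonpos hu.1.le hu.2)) _) hm).1 hPL
  simpa [Real.exp_log hu.1] using this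

/-- Connectedness of `[0, 1)` propagates nonvanishing from `τ = 0`. -/
lemma scaledSum_ne_zero {n : ℕ} (p : MvPolynomial (Fin n) ℂ) (β ℓ v : Fin n → ℝ)
    (b : Fin n →₀ ℕ) (hb : b ∈ p.support) (hbβ : ∀ i, (b i : ℝ) = β i)
    (hℓ : ∀ α ∈ p.support, α ≠ b → 0 < gap β ℓ α)
    (hv : ∀ α ∈ p.support, α ≠ b → 0 < gap β v α)
    (h1 : ∀ τ ∈ Ioo (0 : ℝ) 1, ∀ y, scaledSum p β ℓ v τ 1 y ≠ 0)
    (τ : ℝ) (hτ : τ ∈ Ico (0 : ℝ) 1) (u : ℝ) (hu : u ∈ Icc (0 : ℝ) 1) (y : Fin n → Circle) :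
    scaledSum p β ℓ v τ u y ≠ 0 := by
  have hnn : ∀ w, (∀ α ∈ p.support, α ≠ b → 0 < gap β w α) →
      ∀ α ∈ p.support, 0 ≤ gap β w α := fun w hw α hα => by
    by_cases h : α = b
    · simp [gap, h, hbβ]
    · exact (hw α hα h).le
  have hℓ' := hnn ℓ hℓ
  have hv' := hnn v hv
  have hc := continuous_scaledSum p β ℓ v hℓ' hv'
  let G : Set ℝ := {τ | ∀ q ∈ Icc (0 : ℝ) 1 ×ˢ (univ : Set (Fin n → Circle)),
    scaledSum p β ℓ v τ q.1 q.2 ≠ 0}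
  have hG : IsOpen G := by
    rw [isOpen_iff_eventually]
    intro τ hτ
    exact (isCompact_Icc.prod isCompact_univ).eventually_forall_of_forall_eventually
      fun q hq => hc.continuousAt.eventually_ne (hτ q hq)
  have hsub : Ico (0 : ℝ) 1 ⊆ G := by
    refine isPreconnected_Ico.subset_of_closure_inter_subset hG ⟨0, by simp, ?_⟩ ?_
    · exact fun q _ => scaledSum_zero p β ℓ v b hb hbβ hℓ _ _
    rintro τ ⟨hτcl, hτ⟩ ⟨u, y⟩ ⟨hu, -⟩
    rcases hu.1.eq_or_lt with rfl | hu0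
    · exact scaledSum_zero' p β ℓ v b hb hbβ hv _ _
    have hone : ∀ y, scaledSum p β ℓ v τ 1 y ≠ 0 := by
      rcases hτ.1.eq_or_lt with rfl | h0
      · exact scaledSum_zero p β ℓ v b hb hbβ hℓ _
      · exact h1 τ ⟨h0, hτ.2⟩
    have hc1 : Continuous fun q : ℝ × (Fin n → Circle) => ‖scaledSum p β ℓ v q.1 1 q.2‖ :=
      (hc.comp (by fun_prop : Continuous fun q : ℝ × (Fin n → Circle) => (q.1, (1 : ℝ), q.2))).norm
    obtain ⟨y₀, -, hmin⟩ := isCompact_univ.exists_isMinOn ⟨(1 : Fin n → Circle), mem_univ _⟩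
      (hc1.comp (Continuous.prodMk_right τ)).continuousOn
    set m := ‖scaledSum p β ℓ v τ 1 y₀‖ with hm
    have hmpos : 0 < m := norm_pos_iff.2 (hone y₀)
    -- Halving the minimum `m` keeps the lower bound valid on the torus for nearby parameters.
    have hev : ∀ᶠ τ' in 𝓝 τ, ∀ y ∈ (univ : Set (Fin n → Circle)),
        m / 2 < ‖scaledSum p β ℓ v τ' 1 y‖ :=
      isCompact_univ.eventually_forall_of_forall_eventually fun y _ =>
        hc1.continuousAt.eventually_const_lt
          (lt_of_lt_of_le (half_lt_self hmpos) (hmin (a := y) (mem_univ y)))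
    have hfr : ∃ᶠ τ' in 𝓝 τ, m / 2 ≤ ‖scaledSum p β ℓ v τ' u y‖ := by
      refine ((mem_closure_iff_frequently.1 hτcl).and_eventually hev).mono ?_
      rintro τ' ⟨hg, hl⟩
      exact le_norm_scaledSum p β ℓ v hℓ' hv' τ' (fun u hu y => hg (u, y) ⟨hu, mem_univ y⟩) (m / 2)
        (half_pos hmpos) (fun y => (hl y (mem_univ y)).le) u ⟨hu0, hu.2⟩ y
    have hc2 : Continuous fun τ' => ‖scaledSum p β ℓ v τ' u y‖ :=
      (hc.comp (by fun_prop : Continuous fun τ' : ℝ => (τ', u, y))).norm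
    have hle : m / 2 ≤ ‖scaledSum p β ℓ v τ u y‖ :=
      (isClosed_le continuous_const hc2).mem_of_frequently_of_tendsto hfr tendsto_id
    exact norm_pos_iff.1 (lt_of_lt_of_le (half_pos hmpos) hle)
  exact hsub hτ (u, y) ⟨hu, mem_univ y⟩

lemma mem_newtonPolytope {n : ℕ} {p : MvPolynomial (Fin n) ℂ} {α : Fin n →₀ ℕ}
    (hα : α ∈ p.support) : (fun i => (α i : ℝ)) ∈ NewtonPolytope p :=
  subset_convexHull ℝ _ ⟨α, hα, rfl⟩

/-- An integral vector orthogonal to a rationally independent one vanishes. -/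
lemma eq_of_gap_eq_zero {n : ℕ} {ℓ : Fin n → ℝ} (hℓ : LinearIndependent ℚ ℓ)
    {β : Fin n → ℝ} (hβint : ∀ i, ∃ k : ℤ, β i = (k : ℝ)) {α : Fin n →₀ ℕ}
    (h : gap β ℓ α = 0) (i : Fin n) : (α i : ℝ) = β i := by
  choose k hk using hβint
  have := Fintype.linearIndependent_iff.1 hℓ (fun i => (k i : ℚ) - α i) (by
    rw [← h, gap]
    refine Finset.sum_congr rfl fun i _ => ?_
    rw [Rat.smul_def, hk]
    push_cast
    ring) i
  rw [hk]
  have h2 : ((k i : ℚ) : ℝ) = ((α i : ℚ) : ℝ) := by rw [sub_eq_zero.1 this]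
  push_cast at h2
  exact h2.symm

/-- The maximizer `β` is an exponent of `p`: a linear functional on the convex hull of the exponents
is maximized at an exponent, and by independence of `ℓ` that exponent is `β`. -/
lemma exists_support_eq {n : ℕ} {p : MvPolynomial (Fin n) ℂ} (hp : p ≠ 0)
    {ℓ : Fin n → ℝ} (hℓ : LinearIndependent ℚ ℓ) {β : Fin n → ℝ}
    (hβ : β ∈ NewtonPolytope p) (hβint : ∀ i, ∃ k : ℤ, β i = (k : ℝ))
    (hβmax : ∀ α ∈ NewtonPolytope p, ∑ i, α i * ℓ i ≤ ∑ i, β i * ℓ i) :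
    ∃ b ∈ p.support, ∀ i, (b i : ℝ) = β i := by
  obtain ⟨b, hb, hmax⟩ := p.support.exists_max_image (fun α => ∑ i, (α i : ℝ) * ℓ i)
    (by simpa [Finset.nonempty_iff_ne_empty] using hp)
  refine ⟨b, hb, eq_of_gap_eq_zero hℓ hβint ?_⟩
  have hle : ∑ i, β i * ℓ i ≤ ∑ i, (b i : ℝ) * ℓ i := by
    have hconv : Convex ℝ {x : Fin n → ℝ | ∑ i, x i * ℓ i ≤ ∑ i, (b i : ℝ) * ℓ i} := by
      refine convex_halfSpace_le ⟨fun x y => ?_, fun c x => ?_⟩ _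
      · simp [add_mul, Finset.sum_add_distrib]
      · simp [Finset.mul_sum, mul_assoc]
    refine convexHull_min ?_ hconv hβ
    rintro _ ⟨α, hα, rfl⟩
    exact hmax α hα
  have := hβmax _ (mem_newtonPolytope hb)
  rw [gap_eq]
  linarith

/-- In the interior of the normal cone one can still move a little in direction `α - β`, so the
defining inequality for `α` is strict. -/
lemma gap_pos_of_mem_interior {n : ℕ} {p : MvPolynomial (Fin n) ℂ} {β v : Fin n → ℝ}
    (hv : v ∈ interior {w : Fin n → ℝ |
      ∀ α ∈ NewtonPolytope p, ∑ i, α i * w i ≤ ∑ i, β i * w i})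
    {α : Fin n →₀ ℕ} (hα : α ∈ p.support) (hne : ¬ ∀ i, (α i : ℝ) = β i) :
    0 < gap β v α := by
  have hc : Tendsto (fun ε : ℝ => v - ε • (fun i => β i - (α i : ℝ))) (𝓝[>] 0) (𝓝 v) := by
    refine (Continuous.tendsto' (by fun_prop) _ _ (by simp)).mono_left nhdsWithin_le_nhds
  obtain ⟨ε, hmem, hε⟩ :=
    ((hc.eventually (mem_interior_iff_mem_nhds.1 hv)).and self_mem_nhdsWithin).exists
  have h := hmem _ (mem_newtonPolytope hα)
  have h2 : 0 ≤ gap β (v - ε • (fun i => β i - (α i : ℝ))) α := by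
    rw [gap_eq]
    linarith
  have h3 : gap β (v - ε • (fun i => β i - (α i : ℝ))) α =
      gap β v α - ε * ∑ i, (β i - (α i : ℝ)) ^ 2 := by
    simp only [gap, Finset.mul_sum, ← Finset.sum_sub_distrib]
    refine Finset.sum_congr rfl fun i _ => ?_
    simp only [Pi.sub_apply, Pi.smul_apply, smul_eq_mul]
    ring
  have h4 : 0 < ∑ i, (β i - (α i : ℝ)) ^ 2 := by
    push Not at hne
    obtain ⟨i, hi⟩ := hne
    exact Finset.sum_pos' (fun _ _ => sq_nonneg _)
      ⟨i, Finset.mem_univ i, by have := sub_ne_zero.2 hi.symm; positivity⟩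
  have := mul_pos (mem_Ioi.1 hε) h4
  linarith

theorem stmt_8 (n : ℕ) (p : MvPolynomial (Fin n) ℂ) (hp : p ≠ 0)
    (ℓ : Fin n → ℝ) (hℓ : LinearIndependent ℚ ℓ)
    (β : Fin n → ℝ)
    (hβ : β ∈ NewtonPolytope p) (hβint : ∀ i, ∃ k : ℤ, β i = (k : ℝ))
    (hβmax : ∀ α ∈ NewtonPolytope p, ∑ i, α i * ℓ i ≤ ∑ i, β i * ℓ i)
    (hray : ∀ t : ℝ, 0 < t → t • ℓ ∉ Amoeba p) :
    interior {w : Fin n → ℝ | ∀ α ∈ NewtonPolytope p, ∑ i, α i * w i ≤ ∑ i, β i * w i}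
      ⊆ connectedComponentIn (Amoeba p)ᶜ ℓ := by
  intro w hw
  obtain ⟨b, hb, hbβ⟩ := exists_support_eq hp hℓ hβ hβint hβmax
  have hnot : ∀ α : Fin n →₀ ℕ, α ≠ b → ¬ ∀ i, (α i : ℝ) = β i := fun α hne h =>
    hne (Finsupp.ext fun i => by exact_mod_cast (h i).trans (hbβ i).symm)
  have hgℓ : ∀ α ∈ p.support, α ≠ b → 0 < gap β ℓ α := fun α hα hne => by
    have h0 : 0 ≤ gap β ℓ α := by
      rw [gap_eq]
      linarith [hβmax _ (mem_newtonPolytope hα)]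
    exact h0.lt_of_ne fun h => hnot α hne (eq_of_gap_eq_zero hℓ hβint h.symm)
  -- Split `w = ε ℓ + v` with `v` still in the interior of the normal cone.
  obtain ⟨ε, hv, hε⟩ : ∃ ε : ℝ, w - ε • ℓ ∈ interior {w : Fin n → ℝ |
      ∀ α ∈ NewtonPolytope p, ∑ i, α i * w i ≤ ∑ i, β i * w i} ∧ 0 < ε := by
    have hc : Tendsto (fun ε : ℝ => w - ε • ℓ) (𝓝[>] 0) (𝓝 w) :=
      (Continuous.tendsto' (by fun_prop) _ _ (by simp)).mono_left nhdsWithin_le_nhds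
    exact ((hc.eventually (isOpen_interior.mem_nhds hw)).and self_mem_nhdsWithin).exists
  set v := w - ε • ℓ with hvdef
  have hgv : ∀ α ∈ p.support, α ≠ b → 0 < gap β v α := fun α hα hne =>
    gap_pos_of_mem_interior hv hα (hnot α hne)
  have h1 : ∀ τ ∈ Ioo (0 : ℝ) 1, ∀ y, scaledSum p β ℓ v τ 1 y ≠ 0 := by
    intro τ hτ y h
    refine hray (-Real.log τ) (neg_pos.2 (Real.log_neg hτ.1 hτ.2)) ⟨fun i => (y i : ℂ).arg, ?_⟩
    have := eval_eq_scaledSum p β ℓ v (-Real.log τ) 0 (fun i => (y i : ℂ).arg)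
    simpa [Real.exp_log hτ.1, Circle.exp_arg, h] using this
  have hmain : ∀ t s : ℝ, 0 < t → 0 ≤ s → t • ℓ + s • v ∉ Amoeba p := by
    rintro t s ht hs ⟨θ, hθ⟩
    rw [eval_eq_scaledSum p β] at hθ
    refine scaledSum_ne_zero p β ℓ v b hb hbβ hgℓ hgv h1 (Real.exp (-t)) ⟨(Real.exp_pos _).le, ?_⟩
      (Real.exp (-s)) ⟨(Real.exp_pos _).le, ?_⟩ _
      ((mul_eq_zero.1 hθ).resolve_left (Complex.exp_ne_zero _))
    · exact Real.exp_lt_one_iff.2 (by linarith)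
    · exact Real.exp_le_one_iff.2 (by linarith)
  let φ : ℝ × ℝ → (Fin n → ℝ) := fun q => q.1 • ℓ + q.2 • v
  have hpre : IsPreconnected (φ '' (Ioi (0 : ℝ) ×ˢ Ici (0 : ℝ))) :=
    (isPreconnected_Ioi.prod isPreconnected_Ici).image φ (by fun_prop)
  refine hpre.subset_connectedComponentIn (F := (Amoeba p)ᶜ) ⟨(1, 0), by simp, by simp [φ]⟩ ?_
    ⟨(ε, 1), by simpa using hε, by simp [φ, hvdef]⟩
  rintro _ ⟨⟨t, s⟩, ⟨ht, hs⟩, rfl⟩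
  exact hmain t s ht hs
end

section
/- Let ℓ ∈ ℝ^n have ℚ-linearly independent entries and let p ∈ ℂ[z_1, …, z_n] be such that the function f(x) = p(e^{i x ℓ_1}, …, e^{i x ℓ_n}) is real-rooted. Then for every real t ≠ 0 and every θ ∈ ℝ^n, p(e^{t ℓ_1 + iθ_1}, …, e^{t ℓ_n + iθ_n}) ≠ 0; that is, the set {tℓ : t ∈ ℝ, t ≠ 0} is disjoint from the amoeba 𝒜(p). -/
open MvPolynomial Complex

/-!
Write `f(z) = p(e^{i z ℓ₁}, …, e^{i z ℓₙ})`, and for phases `u` in the torus `(ℝ / ℤ)ⁿ` let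
`Φ(u, z) = p(e^{2πi u₁} e^{i z ℓ₁}, …, e^{2πi uₙ} e^{i z ℓₙ})`. A zero of `p` over the point `tℓ` with
arguments `θ` is a zero of `Φ(θ / 2π, ·)` at the point `-it`, which is nonreal for `t ≠ 0`.

Real translates of `f` are the functions `Φ(xℓ, ·)` (`Phi_add_line`), and the line `ℝℓ` is dense in
the torus by Kronecker's theorem (`denseRange_line`). So `Φ(θ / 2π, ·)` is a locally uniform limit of
translates of `f`, all of which have only real zeros. By Hurwitz's theorem
(`exists_zero_of_close`), an isolated zero at `-it` would force a nonreal zero of some translate. If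
the zero is not isolated, `Φ(θ / 2π, ·)` vanishes identically, and by density (`Phi_eq_zero_of_phase`)
so does `f`, which is again impossible.

Kronecker's theorem is proved by Fourier analysis: the distance to the line is a continuous function
on the torus invariant under translation along the line; rational independence of `ℓ` kills all its
nonconstant Fourier coefficients, so it is constant, equal to its value `0` at the origin.
-/

namespace AmoebaLine

open MeasureTheory Topology Filter

/-- The Haar probability measure on `ℝ / ℤ`, the normalisation for which the Fourier coefficients
`UnitAddTorus.mFourierCoeff` are defined. -/
noncomputable local instance : MeasureSpace UnitAddCircle := ⟨AddCircle.haarAddCircle⟩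

local instance : Measure.IsAddHaarMeasure (volume : Measure UnitAddCircle) :=
  inferInstanceAs (Measure.IsAddHaarMeasure AddCircle.haarAddCircle)

local instance : IsProbabilityMeasure (volume : Measure UnitAddCircle) :=
  inferInstanceAs (IsProbabilityMeasure AddCircle.haarAddCircle)

/-- The linear flow `x ↦ xℓ mod ℤⁿ` on the torus `(ℝ / ℤ)ⁿ`. -/
def line {n : ℕ} (ℓ : Fin n → ℝ) (x : ℝ) : UnitAddTorus (Fin n) :=
  fun k => ((x * ℓ k : ℝ) : UnitAddCircle)

lemma line_add {n : ℕ} (ℓ : Fin n → ℝ) (x y : ℝ) : line ℓ (x + y) = line ℓ x + line ℓ y := by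
  ext k
  simp [line, add_mul]

lemma line_neg {n : ℕ} (ℓ : Fin n → ℝ) (x : ℝ) : line ℓ (-x) = -line ℓ x := by
  ext k
  simp [line]

/-- A nontrivial character of the torus is nontrivial on a line of rationally independent slopes:
half a period away from `0` it takes the value `-1`. -/
lemma exists_mFourier_line {n : ℕ} {ℓ : Fin n → ℝ} (hℓ : LinearIndependent ℚ ℓ)
    {m : Fin n → ℤ} (hm : m ≠ 0) : ∃ x, UnitAddTorus.mFourier m (line ℓ x) = -1 := by
  have hs : ∑ k, (m k : ℝ) * ℓ k ≠ 0 := by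
    intro h0
    apply hm
    have := Fintype.linearIndependent_iff.1 hℓ (fun k => (m k : ℚ)) (by
      simpa [Rat.smul_def] using h0)
    ext k
    exact_mod_cast this k
  refine ⟨1 / (2 * ∑ k, (m k : ℝ) * ℓ k), ?_⟩
  set s := ∑ k, (m k : ℝ) * ℓ k with hsdef
  have hsC : (s : ℂ) ≠ 0 := by exact_mod_cast hs
  simp only [UnitAddTorus.mFourier, ContinuousMap.coe_mk, line, fourier_coe_apply]
  rw [← Complex.exp_sum, ← Complex.exp_pi_mul_I]
  congr 1
  have : ∀ k, 2 * (Real.pi : ℂ) * I * (m k : ℂ) * ((1 / (2 * s) * ℓ k : ℝ) : ℂ) / ((1 : ℝ) : ℂ)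
      = Real.pi * I / s * ((m k : ℂ) * ℓ k) := by
    intro k
    push_cast
    field_simp
  rw [Finset.sum_congr rfl fun k _ => this k, ← Finset.mul_sum]
  have h2 : ∑ k, (m k : ℂ) * (ℓ k : ℂ) = s := by rw [hsdef]; push_cast; rfl
  rw [h2]
  field_simp

/-- A continuous function on the torus that is invariant under the flow is constant: translating
by a point where the character `m ≠ 0` equals `-1` shows that its `m`-th Fourier coefficient is
its own negative. -/
lemma eq_of_invariant {n : ℕ} {ℓ : Fin n → ℝ} (hℓ : LinearIndependent ℚ ℓ)
    (h : C(UnitAddTorus (Fin n), ℂ)) (hinv : ∀ x u, h (u + line ℓ x) = h u)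
    (u v : UnitAddTorus (Fin n)) : h u = h v := by
  have hc : ∀ m, m ≠ 0 → UnitAddTorus.mFourierCoeff h m = 0 := by
    intro m hm
    obtain ⟨x, hx⟩ := exists_mFourier_line hℓ (neg_ne_zero.2 hm)
    have h1 : UnitAddTorus.mFourierCoeff h m = -UnitAddTorus.mFourierCoeff h m := by
      conv_lhs => rw [UnitAddTorus.mFourierCoeff]
      rw [← integral_add_right_eq_self _ (line ℓ x), UnitAddTorus.mFourierCoeff, ← integral_neg]
      congr 1
      ext t
      have hmul : UnitAddTorus.mFourier (-m) (t + line ℓ x)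
          = UnitAddTorus.mFourier (-m) t * UnitAddTorus.mFourier (-m) (line ℓ x) := by
        simp [UnitAddTorus.mFourier, ← Finset.prod_mul_distrib, fourier_apply, smul_add,
          AddCircle.toCircle_add]
      rw [hinv, hmul, hx]
      simp
    exact self_eq_neg.1 h1
  have hsum : Summable (UnitAddTorus.mFourierCoeff h) :=
    summable_of_ne_finset_zero (s := {0}) fun m hm => hc m (by simpa using hm)
  have key : ∀ w, h w = UnitAddTorus.mFourierCoeff h 0 := by
    intro w
    have h1 := UnitAddTorus.hasSum_mFourier_series_apply_of_summable hsum w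
    have h2 := hasSum_single (f := fun i => UnitAddTorus.mFourierCoeff h i •
      UnitAddTorus.mFourier i w) 0 (fun m hm => by simp [hc m hm])
    simpa [UnitAddTorus.mFourier_zero] using h1.unique h2
  rw [key, key]

/-- Kronecker's density theorem for linear flows: the distance to the line is a continuous
invariant function, hence constant, and it vanishes at the origin. -/
lemma denseRange_line {n : ℕ} {ℓ : Fin n → ℝ} (hℓ : LinearIndependent ℚ ℓ) :
    DenseRange (line ℓ) := by
  have hne : (Set.range (line ℓ)).Nonempty := Set.range_nonempty _
  have hle : ∀ x u, Metric.infDist (u + line ℓ x) (Set.range (line ℓ))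
      ≤ Metric.infDist u (Set.range (line ℓ)) := by
    intro x u
    rw [Metric.le_infDist hne]
    rintro _ ⟨y, rfl⟩
    refine (Metric.infDist_le_dist_of_mem (y := line ℓ (y + x)) (Set.mem_range_self _)).trans ?_
    rw [line_add, dist_add_right]
  have hinv : ∀ x u, Metric.infDist (u + line ℓ x) (Set.range (line ℓ))
      = Metric.infDist u (Set.range (line ℓ)) := by
    intro x u
    refine (hle x u).antisymm ?_
    have := hle (-x) (u + line ℓ x)
    rwa [line_neg, add_neg_cancel_right] at this
  intro u
  rw [Metric.mem_closure_iff_infDist_zero hne]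
  have := eq_of_invariant hℓ
    ⟨fun u => ((Metric.infDist u (Set.range (line ℓ)) : ℝ) : ℂ),
      Complex.continuous_ofReal.comp (Metric.continuous_infDist_pt _)⟩
    (fun x u => by simp [hinv]) u (line ℓ 0)
  simp only [ContinuousMap.coe_mk, Complex.ofReal_inj] at this
  rw [this, Metric.infDist_zero_of_mem (Set.mem_range_self _)]

/-- If `F` vanishes at the centre of a closed disc but nowhere on its boundary circle, then every
entire function `g` uniformly close to `F` on the disc has a zero there. This is the part of
Hurwitz's theorem that follows from the maximum principle for `1 / g`. -/
lemma exists_zero_of_close {F : ℂ → ℂ} (hF : Continuous F) {z₀ : ℂ} (h0 : F z₀ = 0) {r : ℝ}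
    (hr : 0 < r) (hne : ∀ z ∈ Metric.sphere z₀ r, F z ≠ 0) :
    ∃ δ > 0, ∀ g : ℂ → ℂ, Differentiable ℂ g →
      (∀ z ∈ Metric.closedBall z₀ r, ‖g z - F z‖ < δ) → ∃ z ∈ Metric.closedBall z₀ r, g z = 0 := by
  obtain ⟨w, hw, hmin⟩ := (isCompact_sphere z₀ r).exists_isMinOn
    (NormedSpace.sphere_nonempty.2 hr.le) hF.norm.continuousOn
  have hpos : 0 < ‖F w‖ := norm_pos_iff.2 (hne w hw)
  refine ⟨‖F w‖ / 3, by positivity, fun g hg hclose => ?_⟩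
  by_contra! hz
  have hball : closure (Metric.ball z₀ r) = Metric.closedBall z₀ r := closure_ball _ hr.ne'
  have hd : DiffContOnCl ℂ (fun z => (g z)⁻¹) (Metric.ball z₀ r) :=
    (hg.diffContOnCl).inv (fun z hz' => hz z (hball ▸ hz'))
  have hmax := Complex.norm_le_of_forall_mem_frontier_norm_le Metric.isBounded_ball hd
    (C := (2 * ‖F w‖ / 3)⁻¹) (fun z hz' => by
      rw [frontier_ball _ hr.ne'] at hz'
      have h1 : ‖F w‖ ≤ ‖F z‖ := hmin hz'
      have h2 := hclose z (Metric.sphere_subset_closedBall hz')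
      have h3 := norm_sub_norm_le (F z) (g z)
      rw [norm_sub_rev] at h3
      rw [norm_inv]
      exact inv_anti₀ (by positivity) (by linarith))
    (hball ▸ Metric.mem_closedBall_self hr.le : z₀ ∈ closure (Metric.ball z₀ r))
  have hgz := norm_pos_iff.2 (hz z₀ (Metric.mem_closedBall_self hr.le))
  rw [norm_inv, inv_le_inv₀ hgz (by positivity)] at hmax
  have := hclose z₀ (Metric.mem_closedBall_self hr.le)
  rw [h0, sub_zero] at this
  linarith

/-- The family of entire functions `z ↦ p(e^{2πi uₖ} e^{i z ℓₖ})` indexed by phases `u` in the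
torus `(ℝ / ℤ)ⁿ`. -/
noncomputable def Phi {n : ℕ} (ℓ : Fin n → ℝ) (p : MvPolynomial (Fin n) ℂ)
    (u : UnitAddTorus (Fin n)) (z : ℂ) : ℂ :=
  eval (fun k => fourier 1 (u k) * Complex.exp (I * z * (ℓ k : ℂ))) p

lemma continuous_Phi {n : ℕ} (ℓ : Fin n → ℝ) (p : MvPolynomial (Fin n) ℂ) :
    Continuous (fun q : UnitAddTorus (Fin n) × ℂ => Phi ℓ p q.1 q.2) := by
  refine p.continuous_eval.comp (continuous_pi fun k => ?_)
  fun_prop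

lemma continuous_Phi_left {n : ℕ} (ℓ : Fin n → ℝ) (p : MvPolynomial (Fin n) ℂ) (z : ℂ) :
    Continuous fun u => Phi ℓ p u z := by
  refine p.continuous_eval.comp (continuous_pi fun k => ?_)
  fun_prop

lemma differentiable_Phi {n : ℕ} (ℓ : Fin n → ℝ) (p : MvPolynomial (Fin n) ℂ)
    (u : UnitAddTorus (Fin n)) : Differentiable ℂ (Phi ℓ p u) := by
  have : Phi ℓ p u = fun z => ∑ d ∈ p.support, p.coeff d *
      ∏ k, (fourier 1 (u k) * Complex.exp (I * z * (ℓ k : ℂ))) ^ d k := by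
    ext z
    rw [Phi, eval_eq']
  rw [this]
  fun_prop

/-- Flowing the phases along the line amounts to a real translation of the variable `z`. -/
lemma Phi_add_line {n : ℕ} (ℓ : Fin n → ℝ) (p : MvPolynomial (Fin n) ℂ)
    (u : UnitAddTorus (Fin n)) (x : ℝ) (z : ℂ) :
    Phi ℓ p (u + line ℓ x) z = Phi ℓ p u (z + (2 * Real.pi * x : ℝ)) := by
  unfold Phi
  congr 2
  ext k
  have h : (fourier 1 ((u + line ℓ x) k) : ℂ) = fourier 1 (u k) * fourier 1 (line ℓ x k) := by
    simp [fourier_apply, AddCircle.toCircle_add]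
  rw [h, mul_assoc, line, fourier_coe_apply, ← Complex.exp_add]
  congr 2
  push_cast
  ring

/-- If the function with one phase vanishes identically, then so do those with all phases: its
real translates run through a dense set of phases. -/
lemma Phi_eq_zero_of_phase {n : ℕ} {ℓ : Fin n → ℝ} (hℓ : LinearIndependent ℚ ℓ)
    (p : MvPolynomial (Fin n) ℂ) {u : UnitAddTorus (Fin n)} (hall : ∀ z, Phi ℓ p u z = 0)
    (v : UnitAddTorus (Fin n)) (z : ℂ) : Phi ℓ p v z = 0 := by
  have hc : Continuous fun w => Phi ℓ p (u + w) z := by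
    have hg : Continuous fun w : UnitAddTorus (Fin n) => u + w := continuous_const_add u
    exact (continuous_Phi_left ℓ p z).comp hg
  have hw : ∀ w, Phi ℓ p (u + w) z = 0 := fun w =>
    (denseRange_line hℓ).induction_on (p := fun w => Phi ℓ p (u + w) z = 0) w
      (isClosed_singleton.preimage hc) fun x => by rw [Phi_add_line, hall]
  rw [← add_sub_cancel u v, hw]

/-- On a compact set of arguments, nearby phases give uniformly close functions. -/
lemma Phi_uniformly_near {n : ℕ} (ℓ : Fin n → ℝ) (p : MvPolynomial (Fin n) ℂ)
    (u : UnitAddTorus (Fin n)) {K : Set ℂ} (hK : IsCompact K) {δ : ℝ} (hδ : 0 < δ) :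
    ∀ᶠ v in nhds u, ∀ z ∈ K, ‖Phi ℓ p v z - Phi ℓ p u z‖ < δ := by
  refine hK.eventually_forall_of_forall_eventually fun z _ => ?_
  have hc : Continuous fun q : UnitAddTorus (Fin n) × ℂ => ‖Phi ℓ p q.1 q.2 - Phi ℓ p u q.2‖ :=
    ((continuous_Phi ℓ p).sub ((differentiable_Phi ℓ p u).continuous.comp continuous_snd)).norm
  have hlt : ‖Phi ℓ p u z - Phi ℓ p u z‖ < δ := by rwa [sub_self, norm_zero]
  exact hc.continuousAt.eventually (p := fun s : ℝ => s < δ) (Iio_mem_nhds hlt)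

end AmoebaLine

open AmoebaLine in
theorem stmt_12 (n : ℕ) (ℓ : Fin n → ℝ) (hℓ : LinearIndependent ℚ ℓ)
    (p : MvPolynomial (Fin n) ℂ)
    (hroot : ∀ z : ℂ,
      eval (fun k => Complex.exp (Complex.I * z * (ℓ k : ℂ))) p = 0 → z.im = 0) :
    ∀ t : ℝ, t ≠ 0 → ∀ θ : Fin n → ℝ,
      eval (fun k => Complex.exp ((t * ℓ k : ℝ) + (θ k : ℂ) * Complex.I)) p ≠ 0 := by
  intro t ht θ hzero
  have hphi0 : ∀ z, Phi ℓ p 0 z = eval (fun k => Complex.exp (I * z * (ℓ k : ℂ))) p := by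
    intro z
    simp [Phi]
  have hline : ∀ x z, Phi ℓ p (line ℓ x) z = 0 → z.im = 0 := by
    intro x z hz
    rw [← zero_add (line ℓ x), Phi_add_line, hphi0] at hz
    simpa using hroot _ hz
  set u : UnitAddTorus (Fin n) := fun k => ((θ k / (2 * Real.pi) : ℝ) : UnitAddCircle) with hu
  set z₀ : ℂ := -I * t with hz₀
  have hz₀im : z₀.im = -t := by simp [hz₀]
  have hF0 : Phi ℓ p u z₀ = 0 := by
    rw [← hzero, Phi]
    congr 2
    ext k
    rw [hu, fourier_coe_apply, ← Complex.exp_add]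
    congr 1
    have hpi : (Real.pi : ℂ) ≠ 0 := by exact_mod_cast Real.pi_ne_zero
    rw [hz₀]
    push_cast
    field_simp
    linear_combination (-(t : ℂ) * ℓ k) * I_sq
  have han : ∀ z, AnalyticAt ℂ (Phi ℓ p u) z := fun z => (differentiable_Phi ℓ p u).analyticAt z
  rcases (han z₀).eventually_eq_zero_or_eventually_ne_zero with hev | hev
  · -- If the function with phases `u` vanishes identically, so does `f`, which then has the
    -- nonreal zero `I`.
    have hall : ∀ z, Phi ℓ p u z = 0 := fun z => congrFun
      (AnalyticOnNhd.eq_of_eventuallyEq (f := Phi ℓ p u) (g := 0)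
        (fun z _ => han z) (fun z _ => analyticAt_const) hev) z
    have hI := Phi_eq_zero_of_phase hℓ p hall 0 I
    have := hroot I (by rwa [← hphi0])
    simp at this
  · rw [eventually_nhdsWithin_iff, Metric.eventually_nhds_iff] at hev
    obtain ⟨ε, hε, hne⟩ := hev
    -- The radius keeps the closed ball inside the isolating disc and off the real axis.
    set r := min (ε / 2) (|t| / 2) with hr
    have ht' : 0 < |t| := abs_pos.2 ht
    have hr0 : 0 < r := by positivity
    obtain ⟨δ, hδ, hH⟩ := exists_zero_of_close (differentiable_Phi ℓ p u).continuous hF0 hr0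
      (fun z hz => hne (by
        rw [Metric.mem_sphere.1 hz]
        linarith [min_le_left (ε / 2) (|t| / 2)]) (by
        rintro rfl
        simp at hz
        linarith))
    have hnear := Phi_uniformly_near ℓ p u (isCompact_closedBall z₀ r) hδ
    obtain ⟨x, hx⟩ := (denseRange_line hℓ).exists_mem_open isOpen_interior
      ⟨u, mem_interior_iff_mem_nhds.2 hnear⟩
    obtain ⟨z, hz, hz0⟩ := hH _ (differentiable_Phi ℓ p (line ℓ x)) (interior_subset hx)
    have him := hline x z hz0
    have h1 : |(z - z₀).im| ≤ r := (Complex.abs_im_le_norm _).trans (by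
      simpa [dist_eq_norm] using hz)
    rw [Complex.sub_im, him, hz₀im] at h1
    simp only [zero_sub, neg_neg] at h1
    linarith [min_le_right (ε / 2) (|t| / 2)]
end

section
/- Let ω = (ω_1, …, ω_s) be a vector of strictly positive real numbers whose ℚ-linear span has dimension n. Then there exist an n × s matrix A with nonnegative integer entries and a vector ℓ = (ℓ_1, …, ℓ_n) of strictly positive real numbers whose entries are ℚ-linearly independent such that ω = Aᵀℓ, i.e., ω_j = Σ_{k=1}^{n} A_{kj} ℓ_k for every j. -/
/-!
Choose a `ℚ`-basis `β` of the span of `ω` among the entries of `ω`, so that `β` is a positive vector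
and `ω j = ∑ k, M j k * β k` with rational `M`. The idea is to enclose the ray through `β` in a
narrow rational simplicial cone, with generators `r + t • e_i` where `t > 0` is a small rational and
`r` is a rational vector very close to `β`. The coordinates `ℓ` of `β` in these generators are
positive, and `ω j = ∑ i, (M j ⬝ r + t * M j i) * ℓ i`, whose coefficients are close to `ω j > 0`.
A common denominator of these rational coefficients is absorbed into `ℓ`. The independence of `ℓ` is
then automatic: its `n` entries span a space containing the `n`-dimensional span of `ω`.
-/

open Filter Topology

lemma exists_common_denominator {ι : Type*} [Fintype ι] (C : ι → ℚ) (hC : ∀ i, 0 ≤ C i) :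
    ∃ (D : ℕ) (a : ι → ℕ), 0 < D ∧ ∀ i, C i * D = a i := by
  classical
  refine ⟨∏ i, (C i).den, fun i => (C i).num.toNat * ∏ k ∈ Finset.univ.erase i, (C k).den,
    Finset.prod_pos fun i _ => (C i).den_pos, fun i => ?_⟩
  rw [← Finset.mul_prod_erase _ _ (Finset.mem_univ i)]
  have h : (((C i).num.toNat : ℕ) : ℚ) = (C i).num := by
    exact_mod_cast Int.toNat_of_nonneg (Rat.num_nonneg.2 (hC i))
  push_cast
  rw [h, ← mul_assoc, Rat.mul_den_eq_num]

/-- The rational vector `r` and the scale `t` of the cone with generators `r + t • e_i`: the first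
condition says that the coefficients of the `ω j` are positive, the second that `β` lies in the
interior of the cone. -/
lemma exists_rational_cone {s n : ℕ} (β : Fin n → ℝ) (hβ : ∀ k, 0 < β k)
    (M : Fin s → Fin n → ℚ) (hM : ∀ j, 0 < ∑ k, (M j k : ℝ) * β k) :
    ∃ (t : ℚ) (r : Fin n → ℚ), 0 < t ∧ (0 : ℝ) < t + ∑ k, (r k : ℝ) ∧
      (∀ j i, (0 : ℝ) < ∑ k, (M j k : ℝ) * r k + t * M j i) ∧
      ∀ k, (∑ i, β i) * r k < β k * (t + ∑ i, (r i : ℝ)) := by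
  have h1 : ∀ᶠ t : ℝ in 𝓝 0, ∀ j i, 0 < ∑ k, (M j k : ℝ) * β k + t * M j i := by
    refine eventually_all.2 fun j => eventually_all.2 fun i => ?_
    have hc : Continuous fun t : ℝ => ∑ k, (M j k : ℝ) * β k + t * M j i := by fun_prop
    exact hc.continuousAt.eventually_const_lt (by simpa using hM j)
  obtain ⟨ε, hε, hball⟩ := Metric.eventually_nhds_iff.1 h1
  obtain ⟨t, ht0, htε⟩ := exists_rat_btwn hε
  have ht0' : (0 : ℚ) < t := by exact_mod_cast ht0
  have ht := hball (show dist (t : ℝ) 0 < ε by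
    rwa [Real.dist_eq, sub_zero, abs_of_pos ht0])
  have hB : 0 ≤ ∑ i, β i := Finset.sum_nonneg fun i _ => (hβ i).le
  -- For this fixed `t`, every condition on `r` is open and holds at `r = β`.
  have h2 : ∀ᶠ x : Fin n → ℝ in 𝓝 β, 0 < t + ∑ k, x k ∧
      (∀ j i, 0 < ∑ k, (M j k : ℝ) * x k + t * M j i) ∧
      ∀ k, (∑ i, β i) * x k < β k * (t + ∑ i, x i) := by
    refine Eventually.and ?_ (Eventually.and ?_ ?_)
    · have hc : Continuous fun x : Fin n → ℝ => t + ∑ k, x k := by fun_prop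
      exact hc.continuousAt.eventually_const_lt (by positivity)
    · refine eventually_all.2 fun j => eventually_all.2 fun i => ?_
      have hc : Continuous fun x : Fin n → ℝ => ∑ k, (M j k : ℝ) * x k + t * M j i := by fun_prop
      exact hc.continuousAt.eventually_const_lt (ht j i)
    · refine eventually_all.2 fun k => ?_
      have hc : Continuous fun x : Fin n → ℝ => (∑ i, β i) * x k := by fun_prop
      have hc' : Continuous fun x : Fin n → ℝ => β k * (t + ∑ i, x i) := by fun_prop
      refine hc.continuousAt.eventually_lt hc'.continuousAt ?_
      nlinarith [mul_pos (hβ k) ht0]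
  have hd : DenseRange (Pi.map fun (_ : Fin n) (q : ℚ) => (q : ℝ)) :=
    DenseRange.piMap fun _ => Rat.denseRange_cast
  obtain ⟨U, hU, hUo, hUβ⟩ := eventually_nhds_iff.1 h2
  obtain ⟨r, hr⟩ := hd.exists_mem_open hUo ⟨β, hUβ⟩
  exact ⟨t, r, ht0', hU _ hr⟩

theorem stmt_13 (s n : ℕ) (ω : Fin s → ℝ) (hω : ∀ j, 0 < ω j)
    (hn : n = Module.finrank ℚ (Submodule.span ℚ (Set.range ω))) :
    ∃ (A : Matrix (Fin n) (Fin s) ℕ) (ℓ : Fin n → ℝ),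
      (∀ k, 0 < ℓ k) ∧ LinearIndependent ℚ ℓ ∧
      ∀ j, ω j = ∑ k, (A k j : ℝ) * ℓ k := by
  obtain ⟨β, hβpos, M, hM⟩ : ∃ β : Fin n → ℝ, (∀ k, 0 < β k) ∧
      ∃ M : Fin s → Fin n → ℚ, ∀ j, ω j = ∑ k, (M j k : ℝ) * β k := by
    subst hn
    have := Module.Finite.span_of_finite ℚ (Set.finite_range ω)
    obtain ⟨β, hβ, hspan, -⟩ := Submodule.exists_fun_fin_finrank_span_eq ℚ (Set.range ω)
    refine ⟨β, fun k => ?_, ?_⟩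
    · obtain ⟨j, hj⟩ := hβ k
      exact hj ▸ hω j
    · have h : ∀ j, ∃ c : _ → ℚ, ∑ k, c k • β k = ω j := fun j =>
        (Submodule.mem_span_range_iff_exists_fun ℚ).1
          (hspan.symm.le (Submodule.subset_span (Set.mem_range_self j)))
      choose M hM using h
      exact ⟨M, fun j => by simp [← hM j, Rat.smul_def]⟩
  obtain ⟨t, r, ht, hR, hC, hr⟩ := exists_rational_cone β hβpos M fun j => hM j ▸ hω j
  have ht' : (0 : ℝ) < t := by exact_mod_cast ht
  obtain ⟨D, a, hD, ha⟩ := exists_common_denominator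
    (fun p : Fin n × Fin s => ∑ k, M p.2 k * r k + t * M p.2 p.1)
    (fun p => by have := (hC p.2 p.1).le; exact_mod_cast this)
  have hD' : (0 : ℝ) < D := by exact_mod_cast hD
  have ha' : ∀ k j, (a (k, j) : ℝ) = (∑ i, (M j i : ℝ) * r i + t * M j k) * D := by
    intro k j
    exact_mod_cast congrArg (Rat.cast (K := ℝ)) (ha (k, j)).symm
  -- `L` is the sum of the coordinates `m` of `β` in the generators: summing
  -- `β k = L * r k + t * m k` over `k` determines it.
  set L : ℝ := (∑ i, β i) / (t + ∑ i, (r i : ℝ)) with hL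
  set m : Fin n → ℝ := fun k => (β k - L * r k) / t with hm
  have hmk : ∀ k, β k = L * r k + t * m k := fun k => by
    simp only [hm]; field_simp; ring
  have hmL : ∑ k, m k = L := by
    simp only [hm]
    rw [← Finset.sum_div, Finset.sum_sub_distrib, ← Finset.mul_sum, div_eq_iff ht'.ne']
    have : L * (t + ∑ i, (r i : ℝ)) = ∑ i, β i := div_mul_cancel₀ _ hR.ne'
    linarith
  have hrep : ∀ j, ω j = ∑ k, (a (k, j) : ℝ) * (m k / D) := by
    intro j
    have e : ∀ k, (a (k, j) : ℝ) * (m k / D) =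
        (∑ i, (M j i : ℝ) * r i) * m k + t * (M j k * m k) := fun k => by
      rw [ha']; field_simp
    simp_rw [e]
    rw [Finset.sum_add_distrib, ← Finset.mul_sum Finset.univ m, hmL, hM j, Finset.sum_mul, ← Finset.sum_add_distrib]
    exact Finset.sum_congr rfl fun k _ => by rw [hmk k]; ring
  refine ⟨fun k j => a (k, j), fun k => m k / D, fun k => ?_, ?_, hrep⟩
  · refine div_pos (div_pos (sub_pos.2 ?_) ht') hD'
    rw [hL, div_mul_eq_mul_div, div_lt_iff₀ hR]
    exact hr k
  · have := Module.Finite.span_of_finite ℚ (Set.finite_range fun k => m k / (D : ℝ))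
    rw [linearIndependent_iff_card_le_finrank_span, Fintype.card_fin]
    refine hn.le.trans (Submodule.finrank_mono (Submodule.span_le.2 ?_))
    rintro _ ⟨j, rfl⟩
    refine (Submodule.mem_span_range_iff_exists_fun ℚ).2 ⟨fun k => a (k, j), ?_⟩
    simp [hrep j, Rat.smul_def]
end

section
/- For every real number ε with |ε| ≤ 1/2, the entire function f(x) = sin(πx) + ε sin(x) is real-rooted: every z ∈ ℂ with sin(πz) + ε sin(z) = 0 satisfies Im(z) = 0. -/
/-!
Write `z = x + iy` and suppose `y ≠ 0`. The real and imaginary parts of the equation are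
`sin (πx) cosh (πy) = -ε sin x cosh y` and `cos (πx) sinh (πy) = -ε cos x sinh y`.
Since `|y| ≤ |πy|`, we have `cosh y ≤ cosh (πy)` and `|sinh y| ≤ |sinh (πy)|`, so
`sin² (πx) ≤ ε² sin² x` and `cos² (πx) ≤ ε² cos² x`. Adding these gives `1 ≤ ε²`,
a contradiction (the argument only needs `|ε| < 1`).
-/

lemma sq_le_of_mul_add_mul_eq_zero {a b c C ε : ℝ} (h : a * C + ε * (b * c) = 0)
    (hC : C ≠ 0) (hc : |c| ≤ |C|) : a ^ 2 ≤ ε ^ 2 * b ^ 2 := by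
  have h1 : a ^ 2 * C ^ 2 = ε ^ 2 * b ^ 2 * c ^ 2 := by
    have : a * C = -(ε * (b * c)) := by linarith
    calc a ^ 2 * C ^ 2 = (a * C) ^ 2 := by ring
      _ = _ := by rw [this]; ring
  have h2 : c ^ 2 ≤ C ^ 2 := sq_le_sq.2 hc
  have hC2 : 0 < C ^ 2 := by positivity
  refine le_of_mul_le_mul_right ?_ hC2
  rw [h1]
  gcongr

theorem stmt_15 (ε : ℝ) (hε : |ε| ≤ 1 / 2) :
    ∀ z : ℂ, Complex.sin ((Real.pi : ℂ) * z) + (ε : ℂ) * Complex.sin z = 0 → z.im = 0 := by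
  intro z hz
  by_contra hy
  obtain ⟨x, y⟩ := z
  change y ≠ 0 at hy
  rw [Complex.sin_eq, Complex.sin_eq ⟨x, y⟩] at hz
  simp only [Complex.re_ofReal_mul, Complex.im_ofReal_mul, ← Complex.ofReal_sin,
    ← Complex.ofReal_cos, ← Complex.ofReal_sinh, ← Complex.ofReal_cosh] at hz
  have hre := congrArg Complex.re hz
  have him := congrArg Complex.im hz
  simp only [Complex.add_re, Complex.mul_re, Complex.add_im, Complex.mul_im, Complex.ofReal_re,
    Complex.ofReal_im, Complex.I_re, Complex.I_im, Complex.zero_re, Complex.zero_im, mul_zero,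
    zero_mul, mul_one, add_zero, zero_add, sub_zero] at hre him
  have hpi : |y| ≤ |Real.pi * y| := by
    rw [abs_mul, abs_of_pos Real.pi_pos]
    nlinarith [abs_nonneg y, Real.pi_gt_three]
  have h1 := sq_le_of_mul_add_mul_eq_zero hre (Real.cosh_pos _).ne' (by
    rw [abs_of_pos (Real.cosh_pos _), abs_of_pos (Real.cosh_pos _)]; exact Real.cosh_le_cosh.2 hpi)
  have h2 := sq_le_of_mul_add_mul_eq_zero him
    (Real.sinh_ne_zero.2 (mul_ne_zero Real.pi_ne_zero hy)) (by
    rw [Real.abs_sinh, Real.abs_sinh]; exact Real.sinh_le_sinh.2 hpi)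
  have h3 : ε ^ 2 ≤ (1 / 2) ^ 2 := sq_le_sq' (abs_le.1 hε).1 (abs_le.1 hε).2
  have h4 : ε ^ 2 * Real.sin x ^ 2 + ε ^ 2 * Real.cos x ^ 2 = ε ^ 2 := by
    rw [← mul_add, Real.sin_sq_add_cos_sq, mul_one]
  linarith [Real.sin_sq_add_cos_sq (Real.pi * x)]
end

section
/- Let ℓ = (ℓ_1, …, ℓ_n) ∈ ℝ^n have ℚ-linearly independent entries. Then the image of the map x ↦ (x ℓ_1, …, x ℓ_n) from ℝ to the torus (ℝ/2πℤ)^n is dense. Equivalently, for any fixed t ∈ ℝ, the set {(e^{t ℓ_1 + i x ℓ_1}, …, e^{t ℓ_n + i x ℓ_n}) : x ∈ ℝ} is dense in {(e^{t ℓ_1 + i θ_1}, …, e^{t ℓ_n + i θ_n}) : θ ∈ ℝ^n} ⊂ ℂ^n. -/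
/-!
This is Kronecker's theorem, proved by comparing two measures on the torus `𝕋 = (ℝ/ℤ)ⁿ`. Let `H` be
the closure of the one-parameter subgroup `x ↦ x • a`, where `a` has `ℚ`-independent entries. Both
the Haar measure of `𝕋` and the Haar measure of the compact group `H`, pushed forward to `𝕋`, are
probability measures invariant under translation by every `x • a`. By independence every nontrivial
character of `𝕋` takes a value other than `1` on some `x • a`, so its integral vanishes for either
measure (`integral_mFourier_eq_zero`). Trigonometric polynomials are dense in `C(𝕋, ℂ)`, so the two
measures agree (`measure_ext_of_mFourier`). Hence the open complement of `H` is null for the Haar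
measure of `𝕋`, and so it is empty.

The density in `(ℝ/2πℤ)ⁿ` follows by rescaling, and the statement in `ℂⁿ` by applying the
continuous map `θ ↦ (exp (t ℓ k) * exp (i θ k))ₖ`.
-/

open MeasureTheory UnitAddTorus in
/-- A finite measure on the torus is determined by its Fourier coefficients. -/
lemma measure_ext_of_mFourier {d : Type*} [Fintype d] (μ ν : Measure (UnitAddTorus d))
    [IsFiniteMeasure μ] [IsFiniteMeasure ν]
    (h : ∀ m : d → ℤ, ∫ x, mFourier m x ∂μ = ∫ x, mFourier m x ∂ν) : μ = ν := by
  have hint : ∀ (ρ : Measure (UnitAddTorus d)) [IsFiniteMeasure ρ] (f : C(UnitAddTorus d, ℂ)),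
      Integrable f ρ := fun ρ _ f => f.continuous.integrable_of_hasCompactSupport
        (HasCompactSupport.of_compactSpace f)
  have hcont : ∀ (ρ : Measure (UnitAddTorus d)) [IsFiniteMeasure ρ],
      Continuous fun f : C(UnitAddTorus d, ℂ) => ∫ x, f x ∂ρ := by
    intro ρ _
    refine (LipschitzWith.of_dist_le_mul (K := NNReal.mk (ρ.real Set.univ) measureReal_nonneg)
      fun f g => ?_).continuous
    rw [dist_eq_norm, dist_eq_norm, ← integral_sub (hint ρ f) (hint ρ g), NNReal.coe_mk, mul_comm]
    exact norm_integral_le_of_norm_le_const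
      (Filter.Eventually.of_forall fun x => (f - g).norm_coe_le_norm x)
  have key : ∀ f : C(UnitAddTorus d, ℂ), ∫ x, f x ∂μ = ∫ x, f x ∂ν := by
    intro f
    have hf : f ∈ (Submodule.span ℂ (Set.range (mFourier (d := d)))).topologicalClosure := by
      rw [span_mFourier_closure_eq_top]; trivial
    have hcl : IsClosed {f : C(UnitAddTorus d, ℂ) | ∫ x, f x ∂μ = ∫ x, f x ∂ν} :=
      isClosed_eq (hcont μ) (hcont ν)
    refine closure_minimal ?_ hcl hf
    intro g hg
    induction hg using Submodule.span_induction with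
    | mem g hg => obtain ⟨m, rfl⟩ := hg; exact h m
    | zero => simp
    | add g₁ g₂ _ _ h₁ h₂ =>
      simp only [Set.mem_ofPred_eq, ContinuousMap.add_apply] at *
      rw [integral_add (hint μ g₁) (hint μ g₂), integral_add (hint ν g₁) (hint ν g₂), h₁, h₂]
    | smul c g _ hg =>
      simp only [Set.mem_ofPred_eq, ContinuousMap.smul_apply] at *
      rw [integral_smul, integral_smul, hg]
  refine ext_of_forall_integral_eq_of_IsFiniteMeasure fun f => ?_
  have := key ⟨fun x => (f x : ℂ), by fun_prop⟩
  simp only [ContinuousMap.coe_mk] at this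
  rw [integral_complex_ofReal, integral_complex_ofReal] at this
  exact_mod_cast this

open UnitAddTorus in
lemma mFourier_add_apply {d : Type*} [Fintype d] (m : d → ℤ) (x y : UnitAddTorus d) :
    mFourier m (x + y) = mFourier m x * mFourier m y := by
  simp only [mFourier, ContinuousMap.coe_mk, ← Finset.prod_mul_distrib]
  refine Finset.prod_congr rfl fun i _ => ?_
  simp [fourier_apply, smul_add, AddCircle.toCircle_add]

open MeasureTheory UnitAddTorus in
/-- Translation by `h` preserves the integral of a character, but also multiplies it by the value
of the character at `h`; if that value is not `1`, the integral vanishes. -/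
lemma integral_mFourier_eq_zero {d : Type*} [Fintype d] (μ : Measure (UnitAddTorus d))
    (m : d → ℤ) (h : UnitAddTorus d) (hμ : μ.map (h + ·) = μ) (hm : mFourier m h ≠ 1) :
    ∫ x, mFourier m x ∂μ = 0 := by
  have h1 : ∫ x, mFourier m x ∂μ = mFourier m h * ∫ x, mFourier m x ∂μ := by
    conv_lhs => rw [← hμ]
    rw [integral_map (by fun_prop) (mFourier m).continuous.aestronglyMeasurable,
      ← integral_const_mul]
    simp only [mFourier_add_apply]
  have h2 : (mFourier m h - 1) * ∫ x, mFourier m x ∂μ = 0 := by linear_combination -h1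
  exact (mul_eq_zero.mp h2).resolve_left (sub_ne_zero.mpr hm)

/-- The one-parameter subgroup `x ↦ x • a` of the torus `(ℝ/ℤ)ᵈ`. -/
noncomputable def torusLine {d : Type*} (a : d → ℝ) : ℝ →+ UnitAddTorus d where
  toFun x := fun k => ((x * a k : ℝ) : UnitAddCircle)
  map_zero' := by ext k; simp
  map_add' x y := by ext k; simp [add_mul]

open UnitAddTorus in
/-- A nontrivial character of the torus is nontrivial on the line in an independent direction. -/
lemma exists_mFourier_torusLine_ne_one {d : Type*} [Fintype d] (a : d → ℝ)
    (ha : LinearIndependent ℚ a) (m : d → ℤ) (hm : m ≠ 0) :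
    ∃ x : ℝ, mFourier m (torusLine a x) ≠ 1 := by
  have hs : ∑ k, (m k : ℝ) * a k ≠ 0 := by
    intro h0
    apply hm
    have := Fintype.linearIndependent_iff.mp ha (fun k => (m k : ℚ)) (by
      simpa [Rat.smul_def] using h0)
    ext k
    exact_mod_cast this k
  -- At this parameter the phase `x * ∑ m k * a k` is a half turn, so the character is `-1`.
  refine ⟨1 / 2 / ∑ k, (m k : ℝ) * a k, ?_⟩
  set x := 1 / 2 / ∑ k, (m k : ℝ) * a k with hx
  have hxs : x * ∑ k, (m k : ℝ) * a k = 1 / 2 := by rw [hx]; field_simp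
  have : mFourier m (torusLine a x) = -1 := by
    have e : mFourier m (torusLine a x)
        = Complex.exp (∑ k, 2 * Real.pi * Complex.I * m k * (x * a k : ℝ)) := by
      rw [Complex.exp_sum]
      simp [mFourier, torusLine]
    rw [e, ← Complex.exp_pi_mul_I]
    congr 1
    have hc : (x : ℂ) * ∑ k, (m k : ℂ) * (a k : ℂ) = 1 / 2 := by
      simpa using congrArg (Complex.ofReal) hxs
    calc _ = 2 * Real.pi * Complex.I * ((x : ℂ) * ∑ k, (m k : ℂ) * (a k : ℂ)) := by
          simp only [Finset.mul_sum]
          refine Finset.sum_congr rfl fun k _ => ?_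
          push_cast; ring
      _ = _ := by rw [hc]; ring
  rw [this]
  norm_num

open MeasureTheory UnitAddTorus TopologicalSpace in
/-- Kronecker's theorem on `(ℝ/ℤ)ᵈ`: the Haar measure of the closure of the line, pushed forward to
the torus, has the Fourier coefficients of the Haar measure of the torus. -/
lemma dense_range_torusLine {d : Type*} [Fintype d] (a : d → ℝ) (ha : LinearIndependent ℚ a) :
    DenseRange (torusLine a) := by
  set H : AddSubgroup (UnitAddTorus d) := (torusLine a).range.topologicalClosure with hH
  have hHc : IsClosed (H : Set (UnitAddTorus d)) := AddSubgroup.isClosed_topologicalClosure _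
  have hmem : ∀ x, torusLine a x ∈ H := fun x =>
    AddSubgroup.le_topologicalClosure _ ⟨x, rfl⟩
  have : CompactSpace H := isCompact_iff_compactSpace.mp hHc.isCompact
  let μ : Measure (UnitAddTorus d) := Measure.addHaarMeasure ⊤
  let σ : Measure H := Measure.addHaarMeasure ⊤
  let ν : Measure (UnitAddTorus d) := σ.map Subtype.val
  have : IsProbabilityMeasure μ := ⟨Measure.addHaarMeasure_self⟩
  have : IsProbabilityMeasure σ := ⟨Measure.addHaarMeasure_self⟩
  have : IsProbabilityMeasure ν := Measure.isProbabilityMeasure_map (by fun_prop)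
  have hν : ∀ x, ν.map (torusLine a x + ·) = ν := by
    intro x
    have h1 := map_add_left_eq_self σ ⟨torusLine a x, hmem x⟩
    change (σ.map Subtype.val).map _ = σ.map Subtype.val
    conv_rhs => rw [← h1]
    rw [Measure.map_map (by fun_prop) (by fun_prop), Measure.map_map (by fun_prop) (by fun_prop)]
    rfl
  have hμν : μ = ν := by
    refine measure_ext_of_mFourier μ ν fun m => ?_
    by_cases hm : m = 0
    · subst hm; simp [mFourier_zero]
    · obtain ⟨x, hx⟩ := exists_mFourier_torusLine_ne_one a ha m hm
      rw [integral_mFourier_eq_zero μ m _ (map_add_left_eq_self μ _) hx,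
        integral_mFourier_eq_zero ν m _ (hν x) hx]
  have h0 : μ (H : Set (UnitAddTorus d))ᶜ = 0 := by
    rw [hμν, Measure.map_apply (by fun_prop) hHc.measurableSet.compl]
    convert measure_empty (μ := σ)
    ext y
    simp
  have h1 : (H : Set (UnitAddTorus d))ᶜ = ∅ := (hHc.isOpen_compl.measure_eq_zero_iff μ).mp h0
  intro y
  have : y ∈ H := by
    by_contra hy
    exact (h1 ▸ hy : y ∈ (∅ : Set (UnitAddTorus d)))
  rw [hH, ← SetLike.mem_coe, AddSubgroup.topologicalClosure_coe] at this
  simpa using this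

theorem stmt_16 (n : ℕ) (ℓ : Fin n → ℝ) (hℓ : LinearIndependent ℚ ℓ) :
    Dense (Set.range fun x : ℝ => fun k : Fin n =>
      ((x * ℓ k : ℝ) : AddCircle (2 * Real.pi))) ∧
    ∀ t : ℝ,
      {z : Fin n → ℂ | ∃ θ : Fin n → ℝ,
          z = fun k => Complex.exp ((t * ℓ k : ℝ) + (θ k : ℂ) * Complex.I)} ⊆
        closure {z : Fin n → ℂ | ∃ x : ℝ,
          z = fun k => Complex.exp ((t * ℓ k : ℝ) + ((x * ℓ k : ℝ) : ℂ) * Complex.I)} := by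
  have hpi : (2 * Real.pi) ≠ 0 := by positivity
  have hD : DenseRange fun x : ℝ => fun k : Fin n =>
      ((x * ℓ k : ℝ) : AddCircle (2 * Real.pi)) := by
    let e := AddCircle.homeomorphAddCircle (1 : ℝ) (2 * Real.pi) one_ne_zero hpi
    let E : UnitAddTorus (Fin n) → (Fin n → AddCircle (2 * Real.pi)) := fun θ k => e (θ k)
    have hE : Continuous E := by fun_prop
    have hEs : Function.Surjective E := fun y =>
      ⟨fun k => e.symm (y k), funext fun k => e.apply_symm_apply _⟩
    have h := hEs.denseRange.comp (dense_range_torusLine ℓ hℓ) hE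
    -- `E` sends the parameter `x` to `2 * π * x`, so the two lines have the same range.
    refine h.mono ?_
    rintro _ ⟨x, rfl⟩
    refine ⟨x * (2 * Real.pi), ?_⟩
    funext k
    simp only [Function.comp, E, torusLine, AddMonoidHom.coe_mk, ZeroHom.coe_mk, e,
      AddCircle.homeomorphAddCircle_apply_mk]
    congr 1
    ring
  refine ⟨hD, fun t => ?_⟩
  let G : (Fin n → AddCircle (2 * Real.pi)) → (Fin n → ℂ) := fun θ k =>
    Complex.exp (t * ℓ k : ℝ) * (AddCircle.toCircle (θ k) : ℂ)
  have hG : Continuous G := by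
    refine continuous_pi fun k => continuous_const.mul ?_
    exact continuous_subtype_val.comp (AddCircle.continuous_toCircle.comp (continuous_apply k))
  have hGv : ∀ θ : Fin n → ℝ, G (fun k => (θ k : AddCircle (2 * Real.pi)))
      = fun k => Complex.exp ((t * ℓ k : ℝ) + (θ k : ℂ) * Complex.I) := by
    intro θ
    funext k
    simp only [G]
    rw [AddCircle.toCircle_apply_mk, Circle.coe_exp, div_self hpi, one_mul, Complex.exp_add]
  rintro _ ⟨θ, rfl⟩
  rw [← hGv]
  refine closure_mono ?_ (image_closure_subset_closure_image hG ⟨_, hD _, rfl⟩)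
  rintro _ ⟨_, ⟨x, rfl⟩, rfl⟩
  exact ⟨x, hGv _⟩
end

section
/- Let p ∈ ℂ[z_1, …, z_n], let A be an n × n matrix with nonnegative integer entries that is invertible over ℚ, with columns α(1), …, α(n) ∈ ℤ_{≥0}^n, and define q(z_1, …, z_n) = p(z^{α(1)}, …, z^{α(n)}), where z^{α(k)} = Π_{j=1}^{n} z_j^{α(k)_j}. Then the amoeba of q equals the preimage of the amoeba of p under the linear map Aᵀ: 𝒜(q) = {x ∈ ℝ^n : Aᵀx ∈ 𝒜(p)}. -/
/-! Evaluating a monomial `z ^ α(k)` at `exp (x + iθ)` gives `exp ((Aᵀ x)_k + i (Aᵀ θ)_k)`, so `q`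
vanishes over `x` at angle `θ` exactly when `p` vanishes over `Aᵀ x` at angle `Aᵀ θ`
(`eval_monomial_subst`). As `A` is invertible, `Aᵀ` is surjective on real vectors, so every angle
for `p` arises as some `Aᵀ θ` (`exists_transpose_solution`). -/

open MvPolynomial

/-- Substituting the monomials `z ^ α(k)` and evaluating at `exp (x + iθ)` is the same as evaluating
`p` at `exp (Aᵀ x + i Aᵀ θ)`. -/
lemma eval_monomial_subst {n : ℕ} (p : MvPolynomial (Fin n) ℂ) (A : Matrix (Fin n) (Fin n) ℕ)
    (x θ : Fin n → ℝ) :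
    eval (fun j => Complex.exp ((x j : ℂ) + (θ j : ℂ) * Complex.I))
      (MvPolynomial.aeval
        (fun k => ∏ j, (MvPolynomial.X j : MvPolynomial (Fin n) ℂ) ^ A j k) p) =
    eval (fun k => Complex.exp (((∑ j, (A j k : ℝ) * x j : ℝ) : ℂ) +
      ((∑ j, (A j k : ℝ) * θ j : ℝ) : ℂ) * Complex.I)) p := by
  rw [← MvPolynomial.bind₁, ← MvPolynomial.coe_aeval_eq_eval, RingHom.coe_coe,
    MvPolynomial.aeval_bind₁, ← MvPolynomial.coe_aeval_eq_eval, RingHom.coe_coe]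
  congr 2
  funext k
  rw [map_prod]
  simp only [map_pow, aeval_X, ← Complex.exp_nat_mul]
  rw [← Complex.exp_sum]
  congr 1
  push_cast
  rw [Finset.sum_mul, ← Finset.sum_add_distrib]
  exact Finset.sum_congr rfl fun j _ => by ring

/-- A matrix of natural numbers that is invertible over `ℚ` has a surjective transpose over `ℝ`. -/
lemma exists_transpose_solution {n : ℕ} (A : Matrix (Fin n) (Fin n) ℕ)
    (hA : (A.map fun a => (a : ℚ)).det ≠ 0) (φ : Fin n → ℝ) :
    ∃ θ : Fin n → ℝ, (fun k => ∑ j, (A j k : ℝ) * θ j) = φ := by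
  have hdet : (A.map fun a => (a : ℝ)).det ≠ 0 := by
    have h := (algebraMap ℚ ℝ).map_det (A.map fun a => (a : ℚ))
    have h2 : (algebraMap ℚ ℝ).mapMatrix (A.map fun a => (a : ℚ)) = A.map fun a => (a : ℝ) := by
      ext i j
      simp
    rw [h2] at h
    rw [← h]
    simpa using hA
  have hu : IsUnit (A.map fun a => (a : ℝ)) :=
    (Matrix.isUnit_iff_isUnit_det _).2 (isUnit_iff_ne_zero.2 hdet)
  obtain ⟨θ, hθ⟩ := Matrix.vecMul_surjective_iff_isUnit.2 hu φ
  refine ⟨θ, ?_⟩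
  rw [← hθ]
  funext k
  simp [Matrix.vecMul, dotProduct, mul_comm]

theorem stmt_17 (n : ℕ) (p : MvPolynomial (Fin n) ℂ)
    (A : Matrix (Fin n) (Fin n) ℕ)
    (hA : (A.map fun a => (a : ℚ)).det ≠ 0)
    (q : MvPolynomial (Fin n) ℂ)
    (hq : q = MvPolynomial.aeval (fun k => ∏ j, (MvPolynomial.X j : MvPolynomial (Fin n) ℂ) ^ A j k) p) :
    Amoeba q = {x : Fin n → ℝ | (fun k => ∑ j, (A j k : ℝ) * x j) ∈ Amoeba p} := by
  subst hq
  ext x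
  constructor
  · rintro ⟨θ, h⟩
    rw [eval_monomial_subst] at h
    exact ⟨fun k => ∑ j, (A j k : ℝ) * θ j, h⟩
  · rintro ⟨φ, h⟩
    obtain ⟨θ, rfl⟩ := exists_transpose_solution A hA φ
    refine ⟨θ, ?_⟩
    rw [eval_monomial_subst]
    exact h
end
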